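/- arXiv:math/0410104 — 4 statements merged into one kernel-verified Lean document; each statement's English description precedes it below -/
import Mathlib

section
/- Let {X_i : i ∈ 𝒥} satisfy condition (LD3) and for each i let ξ_i be a measurable function of X_i with E ξ_i = 0 and E ξ_i⁴ < ∞. Let T = Σ_{i∈𝒥} ξ_i, σ² = E T², and κ₁ = max_{i∈𝒥} max(|C_i|, |{j ∈ 𝒥 : i ∈ C_j}|). Then σ² ≤ κ₁ Σ_{i∈𝒥} E ξ_i² and E T⁴ ≤ 3σ⁴ + 22 κ₁³ Σ_{i∈𝒥} E ξ_i⁴. -/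
open MeasureTheory ProbabilityTheory Real

/-- Inclusion-exclusion for a symmetric double sum. -/
lemma sum_compl_two {ι : Type*} [Fintype ι] [DecidableEq ι] (S : Finset ι) (H : ι → ι → ℝ)
    (hs : ∀ k l, H k l = H l k) :
    ∑ k, ∑ l, H k l = (∑ k ∈ Sᶜ, ∑ l ∈ Sᶜ, H k l) + 2 * (∑ k ∈ S, ∑ l, H k l)
      - ∑ k ∈ S, ∑ l ∈ S, H k l := by
  have e1 : ∀ f : ι → ℝ, ∑ k, f k = ∑ k ∈ Sᶜ, f k + ∑ k ∈ S, f k := fun f =>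
    (Finset.sum_compl_add_sum S f).symm
  have e2 : ∑ k ∈ Sᶜ, ∑ l ∈ S, H k l = ∑ k ∈ S, ∑ l ∈ Sᶜ, H k l := by
    rw [Finset.sum_comm]
    exact Finset.sum_congr rfl fun k _ => Finset.sum_congr rfl fun l _ => hs _ _
  simp only [e1, Finset.sum_add_distrib]
  rw [e2]; ring

/-- Inclusion-exclusion for a symmetric triple sum. -/
lemma sum_compl_three {ι : Type*} [Fintype ι] [DecidableEq ι] (S : Finset ι)
    (H : ι → ι → ι → ℝ)
    (hs : ∀ j k l, H j k l = H k j l) (hs2 : ∀ j k l, H j k l = H j l k) :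
    ∑ j, ∑ k, ∑ l, H j k l = (∑ j ∈ Sᶜ, ∑ k ∈ Sᶜ, ∑ l ∈ Sᶜ, H j k l)
      + 3 * (∑ j ∈ S, ∑ k, ∑ l, H j k l) - 3 * (∑ j ∈ S, ∑ k ∈ S, ∑ l, H j k l)
      + ∑ j ∈ S, ∑ k ∈ S, ∑ l ∈ S, H j k l := by
  have e1 : ∀ f : ι → ℝ, ∑ k, f k = ∑ k ∈ Sᶜ, f k + ∑ k ∈ S, f k := fun f =>
    (Finset.sum_compl_add_sum S f).symm
  have sw1 : ∀ P Q R : Finset ι, ∑ j ∈ P, ∑ k ∈ Q, ∑ l ∈ R, H j k l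
      = ∑ j ∈ Q, ∑ k ∈ P, ∑ l ∈ R, H j k l := by
    intro P Q R
    rw [Finset.sum_comm]
    exact Finset.sum_congr rfl fun k _ => Finset.sum_congr rfl fun l _ =>
      Finset.sum_congr rfl fun _ _ => hs _ _ _
  have sw2 : ∀ P Q R : Finset ι, ∑ j ∈ P, ∑ k ∈ Q, ∑ l ∈ R, H j k l
      = ∑ j ∈ P, ∑ k ∈ R, ∑ l ∈ Q, H j k l := by
    intro P Q R
    refine Finset.sum_congr rfl fun k _ => ?_
    rw [Finset.sum_comm]
    exact Finset.sum_congr rfl fun k _ => Finset.sum_congr rfl fun l _ => hs2 _ _ _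
  simp only [e1, Finset.sum_add_distrib]
  rw [sw1 Sᶜ S Sᶜ, sw2 Sᶜ Sᶜ S, sw1 Sᶜ S Sᶜ, sw1 Sᶜ S S, sw2 S Sᶜ S]
  ring

/-- The counting bound. -/
lemma count_bound {ι : Type*} [Fintype ι] [DecidableEq ι] (C D1 D2 D3 : ι → Finset ι)
    (h1 : ∀ i, D1 i ⊆ C i) (h2 : ∀ i, D2 i ⊆ C i) (h3 : ∀ i, D3 i ⊆ C i)
    (K : ℝ) (hC : ∀ i, ((C i).card : ℝ) ≤ K)
    (hC' : ∀ i, ((Finset.univ.filter fun j => i ∈ C j).card : ℝ) ≤ K)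
    (m : ι → ℝ) (hm : ∀ i, 0 ≤ m i) (F : ι → ι → ι → ι → ℝ)
    (hF : ∀ i j k l, |F i j k l| ≤ (m i + m j + m k + m l) / 4) :
    |∑ i, ∑ j ∈ D1 i, ∑ k ∈ D2 i, ∑ l ∈ D3 i, F i j k l| ≤ K ^ 3 * ∑ i, m i := by
  have hM : ∀ i, 0 ≤ ∑ j ∈ C i, m j := fun i => Finset.sum_nonneg fun j _ => hm j
  have hsw : ∑ i, ∑ j ∈ C i, m j ≤ K * ∑ i, m i := by
    have : ∑ i, ∑ j ∈ C i, m j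
        = ∑ j, ((Finset.univ.filter fun i => j ∈ C i).card : ℝ) * m j := by
      rw [Finset.sum_comm' (t' := Finset.univ)
        (s' := fun j => Finset.univ.filter fun i => j ∈ C i) (by simp)]
      simp
    rw [this, Finset.mul_sum]
    exact Finset.sum_le_sum fun j _ => mul_le_mul_of_nonneg_right (hC' j) (hm j)
  have hin : ∀ i, |∑ j ∈ D1 i, ∑ k ∈ D2 i, ∑ l ∈ D3 i, F i j k l|
      ≤ (K ^ 3 * m i + 3 * (K ^ 2 * ∑ j ∈ C i, m j)) / 4 := by
    intro i
    have nn : ∀ j k l, 0 ≤ (m i + m j + m k + m l) / 4 := fun j k l => by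
      have := hm i; have := hm j; have := hm k; have := hm l; positivity
    have s1 : |∑ j ∈ D1 i, ∑ k ∈ D2 i, ∑ l ∈ D3 i, F i j k l|
        ≤ ∑ j ∈ C i, ∑ k ∈ C i, ∑ l ∈ C i, (m i + m j + m k + m l) / 4 := by
      refine (Finset.abs_sum_le_sum_abs _ _).trans ?_
      refine (Finset.sum_le_sum (g := fun j => ∑ k ∈ C i, ∑ l ∈ C i, (m i + m j + m k + m l) / 4)
        fun j _ => ?_).trans (Finset.sum_le_sum_of_subset_of_nonneg (h1 i) fun j _ _ =>
          Finset.sum_nonneg fun k _ => Finset.sum_nonneg fun l _ => nn _ _ _)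
      refine (Finset.abs_sum_le_sum_abs _ _).trans ?_
      refine (Finset.sum_le_sum (g := fun k => ∑ l ∈ C i, (m i + m j + m k + m l) / 4)
        fun k _ => ?_).trans (Finset.sum_le_sum_of_subset_of_nonneg (h2 i) fun j _ _ =>
          Finset.sum_nonneg fun k _ => nn _ _ _)
      refine (Finset.abs_sum_le_sum_abs _ _).trans ?_
      exact (Finset.sum_le_sum fun l _ => hF i j k l).trans
        (Finset.sum_le_sum_of_subset_of_nonneg (h3 i) fun l _ _ => nn _ _ _)
    refine s1.trans ?_
    have s2 : ∑ j ∈ C i, ∑ k ∈ C i, ∑ l ∈ C i, (m i + m j + m k + m l) / 4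
        = (((C i).card : ℝ) ^ 3 * m i + 3 * (((C i).card : ℝ) ^ 2 * ∑ j ∈ C i, m j)) / 4 := by
      simp only [← Finset.sum_div, Finset.sum_add_distrib, Finset.sum_const, nsmul_eq_mul,
        ← Finset.mul_sum]
      ring
    rw [s2]
    have := hC i
    have := hm i
    have := hM i
    gcongr
  have hK2 : 0 ≤ K ^ 2 := sq_nonneg K
  calc _ ≤ ∑ i, (K ^ 3 * m i + 3 * (K ^ 2 * ∑ j ∈ C i, m j)) / 4 :=
        (Finset.abs_sum_le_sum_abs _ _).trans (Finset.sum_le_sum fun i _ => hin i)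
    _ = (K ^ 3 * ∑ i, m i + 3 * (K ^ 2 * ∑ i, ∑ j ∈ C i, m j)) / 4 := by
        simp only [← Finset.sum_div, Finset.sum_add_distrib, ← Finset.mul_sum]
    _ ≤ (K ^ 3 * ∑ i, m i + 3 * (K ^ 2 * (K * ∑ i, m i))) / 4 := by gcongr
    _ = _ := by ring

/-- The purely algebraic part of the fourth-moment bound. -/
lemma alg_bound {ι : Type*} [Fintype ι] [DecidableEq ι] (A B C : ι → Finset ι)
    (hAB : ∀ i, A i ⊆ B i) (hBC : ∀ i, B i ⊆ C i)
    (K : ℝ) (hC : ∀ i, ((C i).card : ℝ) ≤ K)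
    (hC' : ∀ i, ((Finset.univ.filter fun j => i ∈ C j).card : ℝ) ≤ K)
    (m : ι → ℝ) (hm : ∀ i, 0 ≤ m i) (e2 : ι → ι → ℝ) (e4 : ι → ι → ι → ι → ℝ)
    (s2 : ∀ i j, e2 i j = e2 j i)
    (sa : ∀ i j k l, e4 i j k l = e4 i k j l) (sb : ∀ i j k l, e4 i j k l = e4 i j l k)
    (b4 : ∀ i j k l, |e4 i j k l| ≤ (m i + m j + m k + m l) / 4)
    (b2 : ∀ i j k l, |e2 i j * e2 k l| ≤ (m i + m j + m k + m l) / 4)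
    (f1 : ∀ i, ∀ j ∈ (A i)ᶜ, ∀ k ∈ (A i)ᶜ, ∀ l ∈ (A i)ᶜ, e4 i j k l = 0)
    (f2 : ∀ i, ∀ j ∈ A i, ∀ k ∈ (B i)ᶜ, ∀ l ∈ (B i)ᶜ, e4 i j k l = e2 i j * e2 k l)
    (f3 : ∀ i, ∀ j ∈ A i, ∀ k ∈ A i, ∀ l ∈ (B i)ᶜ, e4 i j k l = 0)
    (f4 : ∀ i, ∀ j ∈ A i, ∀ k ∈ B i, ∀ l ∈ (C i)ᶜ, e4 i j k l = 0)
    (f5 : ∀ i, ∀ j ∈ (A i)ᶜ, e2 i j = 0)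
    (f6 : ∀ i, ∀ k ∈ B i, ∀ l ∈ (C i)ᶜ, e2 k l = 0) :
    ∑ i, ∑ j, ∑ k, ∑ l, e4 i j k l
      ≤ 3 * (∑ i, ∑ j, e2 i j) ^ 2 + 22 * K ^ 3 * ∑ i, m i := by
  have restr : ∀ (S : Finset ι) (f : ι → ℝ), (∀ l ∈ Sᶜ, f l = 0) → ∑ l, f l = ∑ l ∈ S, f l := by
    intro S f h
    rw [← Finset.sum_compl_add_sum S f, Finset.sum_eq_zero h, zero_add]
  set s := ∑ i, ∑ j, e2 i j with hs
  have inner : ∀ i, ∀ j ∈ A i, ∑ k, ∑ l, e4 i j k l = e2 i j * s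
      - 2 * (∑ k ∈ B i, ∑ l ∈ C i, e2 i j * e2 k l) + (∑ k ∈ B i, ∑ l ∈ B i, e2 i j * e2 k l)
      + 2 * (∑ k ∈ B i, ∑ l ∈ C i, e4 i j k l) - ∑ k ∈ B i, ∑ l ∈ B i, e4 i j k l := by
    intro i j hj
    have t1 := sum_compl_two (B i) (fun k l => e4 i j k l) (fun k l => sb _ _ _ _)
    have t2 := sum_compl_two (B i) (fun k l => e2 i j * e2 k l)
      (fun k l => by rw [s2 k l])
    have t3 : ∑ k ∈ (B i)ᶜ, ∑ l ∈ (B i)ᶜ, e4 i j k l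
        = ∑ k ∈ (B i)ᶜ, ∑ l ∈ (B i)ᶜ, e2 i j * e2 k l :=
      Finset.sum_congr rfl fun k hk => Finset.sum_congr rfl fun l hl => f2 i j hj k hk l hl
    have t4 : ∑ k ∈ B i, ∑ l, e4 i j k l = ∑ k ∈ B i, ∑ l ∈ C i, e4 i j k l :=
      Finset.sum_congr rfl fun k hk => restr _ _ fun l hl => f4 i j hj k hk l hl
    have t5 : ∑ k ∈ B i, ∑ l, e2 i j * e2 k l = ∑ k ∈ B i, ∑ l ∈ C i, e2 i j * e2 k l :=
      Finset.sum_congr rfl fun k hk => restr _ _ fun l hl => by rw [f6 i k hk l hl, mul_zero]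
    have t6 : ∑ k, ∑ l, e2 i j * e2 k l = e2 i j * s := by
      simp only [← Finset.mul_sum, hs]
    linarith
  have outer : ∀ i, ∑ j, ∑ k, ∑ l, e4 i j k l = 3 * ((∑ j, e2 i j) * s)
      - 6 * (∑ j ∈ A i, ∑ k ∈ B i, ∑ l ∈ C i, e2 i j * e2 k l)
      + 3 * (∑ j ∈ A i, ∑ k ∈ B i, ∑ l ∈ B i, e2 i j * e2 k l)
      + 6 * (∑ j ∈ A i, ∑ k ∈ B i, ∑ l ∈ C i, e4 i j k l)
      - 3 * (∑ j ∈ A i, ∑ k ∈ B i, ∑ l ∈ B i, e4 i j k l)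
      - 3 * (∑ j ∈ A i, ∑ k ∈ A i, ∑ l ∈ B i, e4 i j k l)
      + ∑ j ∈ A i, ∑ k ∈ A i, ∑ l ∈ A i, e4 i j k l := by
    intro i
    have t1 := sum_compl_three (A i) (fun j k l => e4 i j k l) (fun j k l => sa _ _ _ _)
      (fun j k l => sb _ _ _ _)
    have t2 : ∑ j ∈ (A i)ᶜ, ∑ k ∈ (A i)ᶜ, ∑ l ∈ (A i)ᶜ, e4 i j k l = 0 :=
      Finset.sum_eq_zero fun j hj => Finset.sum_eq_zero fun k hk =>
        Finset.sum_eq_zero fun l hl => f1 i j hj k hk l hl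
    have t3 : ∑ j ∈ A i, ∑ k ∈ A i, ∑ l, e4 i j k l
        = ∑ j ∈ A i, ∑ k ∈ A i, ∑ l ∈ B i, e4 i j k l :=
      Finset.sum_congr rfl fun j hj => Finset.sum_congr rfl fun k hk =>
        restr _ _ fun l hl => f3 i j hj k hk l hl
    have t4 : ∑ j ∈ A i, ∑ k, ∑ l, e4 i j k l = (∑ j, e2 i j) * s
      - 2 * (∑ j ∈ A i, ∑ k ∈ B i, ∑ l ∈ C i, e2 i j * e2 k l)
      + (∑ j ∈ A i, ∑ k ∈ B i, ∑ l ∈ B i, e2 i j * e2 k l)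
      + 2 * (∑ j ∈ A i, ∑ k ∈ B i, ∑ l ∈ C i, e4 i j k l)
      - (∑ j ∈ A i, ∑ k ∈ B i, ∑ l ∈ B i, e4 i j k l) := by
      rw [Finset.sum_congr rfl (inner i), restr _ _ (f5 i)]
      rw [Finset.sum_sub_distrib, Finset.sum_add_distrib, Finset.sum_add_distrib,
        Finset.sum_sub_distrib, ← Finset.mul_sum, ← Finset.mul_sum, Finset.sum_mul]
    linarith
  have hAC : ∀ i, A i ⊆ C i := fun i => (hAB i).trans (hBC i)
  have hCC : ∀ i, C i ⊆ C i := fun i => subset_rfl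
  have u1 := abs_le.1 (count_bound C A B C hAC hBC hCC K hC hC' m hm _ b2)
  have u2 := abs_le.1 (count_bound C A B B hAC hBC hBC K hC hC' m hm _ b2)
  have u3 := abs_le.1 (count_bound C A B C hAC hBC hCC K hC hC' m hm _ b4)
  have u4 := abs_le.1 (count_bound C A B B hAC hBC hBC K hC hC' m hm _ b4)
  have u5 := abs_le.1 (count_bound C A A B hAC hAC hBC K hC hC' m hm _ b4)
  have u6 := abs_le.1 (count_bound C A A A hAC hAC hAC K hC hC' m hm _ b4)
  have tot : ∑ i, ∑ j, ∑ k, ∑ l, e4 i j k l = 3 * (s * s)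
      - 6 * (∑ i, ∑ j ∈ A i, ∑ k ∈ B i, ∑ l ∈ C i, e2 i j * e2 k l)
      + 3 * (∑ i, ∑ j ∈ A i, ∑ k ∈ B i, ∑ l ∈ B i, e2 i j * e2 k l)
      + 6 * (∑ i, ∑ j ∈ A i, ∑ k ∈ B i, ∑ l ∈ C i, e4 i j k l)
      - 3 * (∑ i, ∑ j ∈ A i, ∑ k ∈ B i, ∑ l ∈ B i, e4 i j k l)
      - 3 * (∑ i, ∑ j ∈ A i, ∑ k ∈ A i, ∑ l ∈ B i, e4 i j k l)
      + ∑ i, ∑ j ∈ A i, ∑ k ∈ A i, ∑ l ∈ A i, e4 i j k l := by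
    rw [Finset.sum_congr rfl fun i _ => outer i]
    rw [Finset.sum_add_distrib, Finset.sum_sub_distrib, Finset.sum_sub_distrib,
      Finset.sum_add_distrib, Finset.sum_add_distrib, Finset.sum_sub_distrib]
    simp only [← Finset.mul_sum]
    rw [← Finset.sum_mul]
  rw [tot]
  linarith [u1.1, u2.2, u3.2, u4.1, u5.1, u6.2]

lemma ind_aux {Ω β γ : Type*} [MeasurableSpace Ω] {μ : Measure Ω} [MeasurableSpace β]
    [MeasurableSpace γ] (U : Ω → β) (V : Ω → γ)
    (φ : β → ℝ) (ψ : γ → ℝ) (hU : Measurable U) (hV : Measurable V) (h : IndepFun U V μ)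
    (hφ : Measurable φ) (hψ : Measurable ψ) :
    ∫ ω, φ (U ω) * ψ (V ω) ∂μ = (∫ ω, φ (U ω) ∂μ) * ∫ ω, ψ (V ω) ∂μ :=
  (h.comp hφ hψ).integral_fun_mul_eq_mul_integral
    (hφ.comp hU).aestronglyMeasurable (hψ.comp hV).aestronglyMeasurable

theorem stmt_15
    {Ω : Type*} [MeasurableSpace Ω] {μ : Measure Ω} [IsProbabilityMeasure μ]
    {ι : Type*} [Fintype ι] [DecidableEq ι]
    (X : ι → Ω → ℝ) (A B C : ι → Finset ι)
    (hXmeas : ∀ i, Measurable (X i))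
    (hiA : ∀ i, i ∈ A i) (hAB : ∀ i, A i ⊆ B i) (hBC : ∀ i, B i ⊆ C i)
    (hLD1 : ∀ i, IndepFun (X i) (fun ω => fun j : ((A i)ᶜ : Finset ι) => X j.1 ω) μ)
    (hLD2 : ∀ i, IndepFun (fun ω => fun j : (A i : Finset ι) => X j.1 ω)
      (fun ω => fun j : ((B i)ᶜ : Finset ι) => X j.1 ω) μ)
    (hLD3 : ∀ i, IndepFun (fun ω => fun j : (B i : Finset ι) => X j.1 ω)
      (fun ω => fun j : ((C i)ᶜ : Finset ι) => X j.1 ω) μ)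
    (ξ : ι → Ω → ℝ)
    (hξfun : ∀ i, ∃ g : ℝ → ℝ, Measurable g ∧ ∀ ω, ξ i ω = g (X i ω))
    (hξmean : ∀ i, ∫ ω, ξ i ω ∂μ = 0)
    (hξ4 : ∀ i, Integrable (fun ω => (ξ i ω) ^ 4) μ)
    (T : Ω → ℝ) (hT : ∀ ω, T ω = ∑ i, ξ i ω)
    (σsq : ℝ) (hσsq : σsq = ∫ ω, (T ω) ^ 2 ∂μ)
    (κ₁ : ℕ)
    (hκ₁ : κ₁ = Finset.univ.sup fun i => max (C i).card
      (Finset.univ.filter fun j => i ∈ C j).card) :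
    σsq ≤ (κ₁ : ℝ) * ∑ i, ∫ ω, (ξ i ω) ^ 2 ∂μ ∧
    (∫ ω, (T ω) ^ 4 ∂μ) ≤ 3 * σsq ^ 2 + 22 * (κ₁ : ℝ) ^ 3 * ∑ i, ∫ ω, (ξ i ω) ^ 4 ∂μ := by
  classical
  choose g hg hξg using hξfun
  have hξm : ∀ i, Measurable (ξ i) := fun i => by
    have : ξ i = fun ω => g i (X i ω) := funext (hξg i)
    rw [this]; exact (hg i).comp (hXmeas i)
  -- integrability
  have i4 : ∀ i j k l, Integrable (fun ω => ξ i ω * ξ j ω * ξ k ω * ξ l ω) μ := by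
    intro i j k l
    refine (((((hξ4 i).add (hξ4 j)).add (hξ4 k)).add (hξ4 l))).mono'
      ((((hξm i).mul (hξm j)).mul (hξm k)).mul (hξm l)).aestronglyMeasurable ?_
    refine Filter.Eventually.of_forall fun ω => ?_
    simp only [Pi.add_apply, Real.norm_eq_abs]
    rw [abs_le]
    constructor <;>
    nlinarith [sq_nonneg (ξ i ω * ξ j ω + ξ k ω * ξ l ω), sq_nonneg (ξ i ω * ξ j ω - ξ k ω * ξ l ω),
      sq_nonneg (ξ i ω ^ 2 - ξ j ω ^ 2), sq_nonneg (ξ k ω ^ 2 - ξ l ω ^ 2),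
      sq_nonneg (ξ i ω ^ 2 + ξ j ω ^ 2), sq_nonneg (ξ k ω ^ 2 + ξ l ω ^ 2)]
  have i2 : ∀ i j, Integrable (fun ω => ξ i ω * ξ j ω) μ := by
    intro i j
    refine ((integrable_const (1 : ℝ)).add (i4 i j i j)).mono'
      ((hξm i).mul (hξm j)).aestronglyMeasurable ?_
    refine Filter.Eventually.of_forall fun ω => ?_
    simp only [Pi.add_apply, Real.norm_eq_abs]
    rw [abs_le]
    constructor <;>
    nlinarith [sq_nonneg (ξ i ω * ξ j ω + 1), sq_nonneg (ξ i ω * ξ j ω - 1)]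
  set e2 : ι → ι → ℝ := fun i j => ∫ ω, ξ i ω * ξ j ω ∂μ with he2
  set e4 : ι → ι → ι → ι → ℝ := fun i j k l => ∫ ω, ξ i ω * ξ j ω * ξ k ω * ξ l ω ∂μ with he4
  set m : ι → ℝ := fun i => ∫ ω, ξ i ω ^ 4 ∂μ with hm
  have s2 : ∀ i j, e2 i j = e2 j i := fun i j => by
    simp only [he2]; congr 1; ext ω; ring
  have sa : ∀ i j k l, e4 i j k l = e4 i k j l := fun i j k l => by
    simp only [he4]; congr 1; ext ω; ring
  have sb : ∀ i j k l, e4 i j k l = e4 i j l k := fun i j k l => by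
    simp only [he4]; congr 1; ext ω; ring
  have hm0 : ∀ i, 0 ≤ m i := fun i => integral_nonneg fun ω => by positivity
  have b4 : ∀ i j k l, |e4 i j k l| ≤ (m i + m j + m k + m l) / 4 := by
    intro i j k l
    have hs : (m i + m j + m k + m l) / 4
        = ∫ ω, (ξ i ω ^ 4 + ξ j ω ^ 4 + ξ k ω ^ 4 + ξ l ω ^ 4) / 4 ∂μ := by
      have q2 : Integrable (fun ω => ξ i ω ^ 4 + ξ j ω ^ 4) μ := (hξ4 i).add (hξ4 j)
      have q3 : Integrable (fun ω => ξ i ω ^ 4 + ξ j ω ^ 4 + ξ k ω ^ 4) μ := q2.add (hξ4 k)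
      rw [integral_div, integral_add q3 (hξ4 l),
        integral_add q2 (hξ4 k), integral_add (hξ4 i) (hξ4 j)]
    rw [hs]
    refine (abs_integral_le_integral_abs).trans (integral_mono (i4 i j k l).abs
      ((((((hξ4 i).add (hξ4 j)).add (hξ4 k)).add (hξ4 l))).div_const 4) fun ω => ?_)
    rw [abs_le]
    constructor <;>
    nlinarith [sq_nonneg (ξ i ω * ξ j ω + ξ k ω * ξ l ω), sq_nonneg (ξ i ω * ξ j ω - ξ k ω * ξ l ω),
      sq_nonneg (ξ i ω ^ 2 - ξ j ω ^ 2), sq_nonneg (ξ k ω ^ 2 - ξ l ω ^ 2)]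
  have b2' : ∀ i j, (e2 i j) ^ 2 ≤ (m i + m j) / 2 := by
    intro i j
    have h1 : (e2 i j) ^ 2 ≤ e4 i j i j := by
      have h0 : 0 ≤ ∫ ω, (ξ i ω * ξ j ω * ξ i ω * ξ j ω - 2 * e2 i j * (ξ i ω * ξ j ω)
          + (e2 i j) ^ 2) ∂μ := integral_nonneg fun ω => by
        simp only [Pi.zero_apply]
        nlinarith [sq_nonneg (ξ i ω * ξ j ω - e2 i j)]
      have q : Integrable (fun ω => ξ i ω * ξ j ω * ξ i ω * ξ j ω
          - 2 * e2 i j * (ξ i ω * ξ j ω)) μ := (i4 i j i j).sub ((i2 i j).const_mul _)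
      rw [integral_add q (integrable_const _),
        integral_sub (i4 i j i j) ((i2 i j).const_mul _), integral_const_mul] at h0
      simp only [integral_const, probReal_univ, smul_eq_mul, one_mul] at h0
      have h3 : ∫ ω, ξ i ω * ξ j ω ∂μ = e2 i j := rfl
      have h4 : ∫ ω, ξ i ω * ξ j ω * ξ i ω * ξ j ω ∂μ = e4 i j i j := rfl
      rw [h3, h4] at h0
      nlinarith
    have h2 := (abs_le.1 (b4 i j i j)).2
    linarith
  have b2 : ∀ i j k l, |e2 i j * e2 k l| ≤ (m i + m j + m k + m l) / 4 := by
    intro i j k l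
    have h1 := b2' i j
    have h2 := b2' k l
    rw [abs_le]
    constructor <;> nlinarith [sq_nonneg (e2 i j + e2 k l), sq_nonneg (e2 i j - e2 k l)]
  -- independence
  have mS : ∀ S : Finset ι, Measurable (fun ω => fun j : S => X j.1 ω) := fun S =>
    measurable_pi_lambda _ fun j => hXmeas j.1
  have mg : ∀ (S : Finset ι) (j : S), Measurable (fun x : S → ℝ => g j.1 (x j)) := fun S j =>
    (hg j.1).comp (measurable_pi_apply j)
  have z1 : ∀ i, ∫ ω, g i (X i ω) ∂μ = 0 := fun i => by
    rw [← hξmean i]; simp only [hξg]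
  have f1 : ∀ i, ∀ j ∈ (A i)ᶜ, ∀ k ∈ (A i)ᶜ, ∀ l ∈ (A i)ᶜ, e4 i j k l = 0 := by
    intro i j hj k hk l hl
    have := ind_aux _ _ (g i) (fun x => g j (x ⟨j, hj⟩) * g k (x ⟨k, hk⟩) * g l (x ⟨l, hl⟩))
      (hXmeas i) (mS _) (hLD1 i) (hg i) (((mg _ ⟨j, hj⟩).mul (mg _ ⟨k, hk⟩)).mul (mg _ ⟨l, hl⟩))
    rw [z1, zero_mul] at this
    rw [← this]
    simp only [he4, hξg]; congr 1; ext ω; ring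
  have f5 : ∀ i, ∀ j ∈ (A i)ᶜ, e2 i j = 0 := by
    intro i j hj
    have := ind_aux _ _ (g i) (fun x => g j (x ⟨j, hj⟩))
      (hXmeas i) (mS _) (hLD1 i) (hg i) (mg _ ⟨j, hj⟩)
    rw [z1, zero_mul] at this
    rw [← this]
    simp only [he2, hξg]
  have hiB : ∀ i, i ∈ B i := fun i => hAB i (hiA i)
  have f2 : ∀ i, ∀ j ∈ A i, ∀ k ∈ (B i)ᶜ, ∀ l ∈ (B i)ᶜ, e4 i j k l = e2 i j * e2 k l := by
    intro i j hj k hk l hl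
    have := ind_aux _ _ (fun x : A i → ℝ => g i (x ⟨i, hiA i⟩) * g j (x ⟨j, hj⟩))
      (fun x => g k (x ⟨k, hk⟩) * g l (x ⟨l, hl⟩))
      (mS _) (mS _) (hLD2 i) ((mg _ ⟨i, hiA i⟩).mul (mg _ ⟨j, hj⟩))
      ((mg _ ⟨k, hk⟩).mul (mg _ ⟨l, hl⟩))
    simp only [he2, he4, hξg]
    rw [← this]; congr 1; ext ω; ring
  have f3 : ∀ i, ∀ j ∈ A i, ∀ k ∈ A i, ∀ l ∈ (B i)ᶜ, e4 i j k l = 0 := by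
    intro i j hj k hk l hl
    have := ind_aux _ _ (fun x : A i → ℝ => g i (x ⟨i, hiA i⟩) * g j (x ⟨j, hj⟩) * g k (x ⟨k, hk⟩))
      (fun x => g l (x ⟨l, hl⟩))
      (mS _) (mS _) (hLD2 i) (((mg _ ⟨i, hiA i⟩).mul (mg _ ⟨j, hj⟩)).mul (mg _ ⟨k, hk⟩))
      (mg _ ⟨l, hl⟩)
    simp only [z1, mul_zero] at this
    simp only [he4, hξg]
    rw [← this]
  have f4 : ∀ i, ∀ j ∈ A i, ∀ k ∈ B i, ∀ l ∈ (C i)ᶜ, e4 i j k l = 0 := by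
    intro i j hj k hk l hl
    have := ind_aux _ _ (fun x : B i → ℝ => g i (x ⟨i, hiB i⟩) * g j (x ⟨j, hAB i hj⟩) * g k (x ⟨k, hk⟩))
      (fun x => g l (x ⟨l, hl⟩))
      (mS _) (mS _) (hLD3 i) (((mg _ ⟨i, hiB i⟩).mul (mg _ ⟨j, hAB i hj⟩)).mul (mg _ ⟨k, hk⟩))
      (mg _ ⟨l, hl⟩)
    simp only [z1, mul_zero] at this
    simp only [he4, hξg]
    rw [← this]
  have f6 : ∀ i, ∀ k ∈ B i, ∀ l ∈ (C i)ᶜ, e2 k l = 0 := by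
    intro i k hk l hl
    have := ind_aux _ _ (fun x : B i → ℝ => g k (x ⟨k, hk⟩)) (fun x => g l (x ⟨l, hl⟩))
      (mS _) (mS _) (hLD3 i) (mg _ ⟨k, hk⟩) (mg _ ⟨l, hl⟩)
    simp only [z1, mul_zero] at this
    simp only [he2, hξg]
    rw [← this]
  -- the counting constants
  have hsup : ∀ i, max (C i).card (Finset.univ.filter fun j => i ∈ C j).card ≤ κ₁ := by
    intro i
    rw [hκ₁]
    exact Finset.le_sup (f := fun i => max (C i).card
      (Finset.univ.filter fun j => i ∈ C j).card) (Finset.mem_univ i)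
  have hC : ∀ i, ((C i).card : ℝ) ≤ κ₁ := fun i => by
    exact_mod_cast (le_max_left _ _).trans (hsup i)
  have hC' : ∀ i, ((Finset.univ.filter fun j => i ∈ C j).card : ℝ) ≤ κ₁ := fun i => by
    exact_mod_cast (le_max_right _ _).trans (hsup i)
  have hσ : σsq = ∑ i, ∑ j, e2 i j := by
    have : ∀ ω, T ω ^ 2 = ∑ i, ∑ j, ξ i ω * ξ j ω := fun ω => by
      rw [hT, sq, Finset.sum_mul_sum]
    rw [hσsq]
    simp only [this]
    rw [integral_finsetSum _ fun i _ => integrable_finsetSum _ fun j _ => i2 i j]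
    exact Finset.sum_congr rfl fun i _ => integral_finsetSum _ fun j _ => i2 i j
  have hT4 : ∫ ω, T ω ^ 4 ∂μ = ∑ i, ∑ j, ∑ k, ∑ l, e4 i j k l := by
    have : ∀ ω, T ω ^ 4 = ∑ i, ∑ j, ∑ k, ∑ l, ξ i ω * ξ j ω * ξ k ω * ξ l ω := fun ω => by
      rw [hT]
      simp only [← Finset.mul_sum, ← Finset.sum_mul]
      ring
    simp only [this]
    rw [integral_finsetSum _ fun i _ => integrable_finsetSum _ fun j _ =>
      integrable_finsetSum _ fun k _ => integrable_finsetSum _ fun l _ => i4 i j k l]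
    refine Finset.sum_congr rfl fun i _ => ?_
    rw [integral_finsetSum _ fun j _ =>
      integrable_finsetSum _ fun k _ => integrable_finsetSum _ fun l _ => i4 i j k l]
    refine Finset.sum_congr rfl fun j _ => ?_
    rw [integral_finsetSum _ fun k _ => integrable_finsetSum _ fun l _ => i4 i j k l]
    refine Finset.sum_congr rfl fun k _ => ?_
    rw [integral_finsetSum _ fun l _ => i4 i j k l]
  constructor
  · set v : ι → ℝ := fun i => ∫ ω, ξ i ω ^ 2 ∂μ with hv
    have hv0 : ∀ i, 0 ≤ v i := fun i => integral_nonneg fun ω => by positivity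
    have iv : ∀ i, Integrable (fun ω => ξ i ω ^ 2) μ := fun i => by
      simpa only [sq] using i2 i i
    have hb : ∀ i j, e2 i j ≤ (v i + v j) / 2 := by
      intro i j
      have hs : (v i + v j) / 2 = ∫ ω, (ξ i ω ^ 2 + ξ j ω ^ 2) / 2 ∂μ := by
        rw [integral_div, integral_add (iv i) (iv j)]
      rw [hs]
      refine integral_mono (i2 i j) (((iv i).add (iv j)).div_const 2) fun ω => ?_
      simp only []
      nlinarith [sq_nonneg (ξ i ω - ξ j ω)]
    have hsw : ∑ i, ∑ j ∈ C i, v j ≤ κ₁ * ∑ i, v i := by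
      have : ∑ i, ∑ j ∈ C i, v j
          = ∑ j, ((Finset.univ.filter fun i => j ∈ C i).card : ℝ) * v j := by
        rw [Finset.sum_comm' (t' := Finset.univ)
          (s' := fun j => Finset.univ.filter fun i => j ∈ C i) (by simp)]
        simp
      rw [this, Finset.mul_sum]
      exact Finset.sum_le_sum fun j _ => mul_le_mul_of_nonneg_right (hC' j) (hv0 j)
    have hi : ∀ i, ∑ j, e2 i j ≤ (κ₁ * v i + ∑ j ∈ C i, v j) / 2 := by
      intro i
      rw [← Finset.sum_compl_add_sum (A i), Finset.sum_eq_zero (f5 i), zero_add]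
      have h1 : ∑ j ∈ A i, e2 i j ≤ ∑ j ∈ C i, (v i + v j) / 2 :=
        (Finset.sum_le_sum fun j _ => hb i j).trans
          (Finset.sum_le_sum_of_subset_of_nonneg ((hAB i).trans (hBC i)) fun j _ _ => by
            have := hv0 i; have := hv0 j; positivity)
      have h2 : ∑ j ∈ C i, (v i + v j) / 2 = ((C i).card * v i + ∑ j ∈ C i, v j) / 2 := by
        simp only [← Finset.sum_div, Finset.sum_add_distrib, Finset.sum_const, nsmul_eq_mul]
      have h3 := mul_le_mul_of_nonneg_right (hC i) (hv0 i)
      linarith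
    rw [hσ]
    have h4 := Finset.sum_le_sum fun i (_ : i ∈ Finset.univ) => hi i
    rw [← Finset.sum_div, Finset.sum_add_distrib, ← Finset.mul_sum] at h4
    linarith
  · rw [hT4, hσ]
    exact alg_bound A B C hAB hBC κ₁ hC hC' m hm0 e2 e4 s2 sa sb b4 b2 f1 f2 f3 f4 f5 f6
end

section
/- Let {X_i : i ∈ 𝒥} satisfy condition (LD4*). For each i let ξ_i be a measurable function of X_i with E ξ_i = 0 and E ξ_i⁴ < ∞, and let η_i be a measurable function of the family {X_j : j ∈ A_i} with E η_i = 0 and E η_i⁴ < ∞. Let T = Σ_{i∈𝒥} ξ_i, S = Σ_{i∈𝒥} η_i and κ₂ = max_{i∈𝒥} max(|D_i*|, |{j ∈ 𝒥 : i ∈ D_j*}|). Then E(T² S²) ≤ 3 E T² · E S² + 12 κ₂³ Σ_{i∈𝒥} (E|ξ_i|⁴ + E|η_i|⁴). -/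
open MeasureTheory ProbabilityTheory Real

namespace Stmt16

/-- `f` is a measurable function of `U`. -/
def MF {Ω E : Type*} [MeasurableSpace E] (U : Ω → E) (f : Ω → ℝ) : Prop :=
  ∃ G : E → ℝ, Measurable G ∧ ∀ ω, f ω = G (U ω)

lemma MF.mul {Ω E : Type*} [MeasurableSpace E] {U : Ω → E} {f g : Ω → ℝ}
    (hf : MF U f) (hg : MF U g) : MF U (fun ω => f ω * g ω) := by
  obtain ⟨F, hF, hF'⟩ := hf
  obtain ⟨G, hG, hG'⟩ := hg
  exact ⟨fun e => F e * G e, hF.mul hG, fun ω => by simp only [hF', hG']⟩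

lemma MF.lift {Ω ι : Type*} {X : ι → Ω → ℝ} {A : ι → Finset ι} {l : ι} {f : Ω → ℝ}
    (hf : MF (fun ω => fun j : (A l : Finset ι) => X j.1 ω) f) {R : Finset ι} (hl : l ∈ R) :
    MF (fun ω => fun l : (R : Finset ι) => fun j : (A l.1 : Finset ι) => X j.1 ω) f := by
  obtain ⟨F, hF, hF'⟩ := hf
  exact ⟨fun w => F (w ⟨l, hl⟩), hF.comp (measurable_pi_apply _), hF'⟩

lemma MF.indep {Ω E E' : Type*} [MeasurableSpace Ω] {μ : Measure Ω} [MeasurableSpace E]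
    [MeasurableSpace E'] {U : Ω → E} {W : Ω → E'} (h : IndepFun U W μ) {f g : Ω → ℝ}
    (hf : MF U f) (hg : MF W g) (hfm : Measurable f) (hgm : Measurable g) :
    ∫ ω, f ω * g ω ∂μ = (∫ ω, f ω ∂μ) * ∫ ω, g ω ∂μ := by
  obtain ⟨F, hF, hF'⟩ := hf
  obtain ⟨G, hG, hG'⟩ := hg
  have h1 : IndepFun f g μ := by
    have := h.comp hF hG
    rwa [show F ∘ U = f from funext fun ω => (hF' ω).symm,
      show G ∘ W = g from funext fun ω => (hG' ω).symm] at this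
  exact h1.integral_fun_mul_eq_mul_integral hfm.aestronglyMeasurable hgm.aestronglyMeasurable

/-- The fourth joint cumulant of centred variables. -/
noncomputable def K {Ω : Type*} [MeasurableSpace Ω] (μ : Measure Ω) (a b c d : Ω → ℝ) : ℝ :=
  (∫ ω, a ω * b ω * c ω * d ω ∂μ) - (∫ ω, a ω * b ω ∂μ) * (∫ ω, c ω * d ω ∂μ)
    - (∫ ω, a ω * c ω ∂μ) * (∫ ω, b ω * d ω ∂μ)
    - (∫ ω, a ω * d ω ∂μ) * (∫ ω, b ω * c ω ∂μ)

lemma K_swap34 {Ω : Type*} [MeasurableSpace Ω] (μ : Measure Ω) (a b c d : Ω → ℝ) :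
    K μ a b c d = K μ a b d c := by
  unfold K
  have e1 : (fun ω => a ω * b ω * c ω * d ω) = fun ω => a ω * b ω * d ω * c ω := by
    funext ω; ring
  have e2 : (fun ω => c ω * d ω) = fun ω => d ω * c ω := by funext ω; ring
  rw [e1, e2]; ring

lemma K_swap24 {Ω : Type*} [MeasurableSpace Ω] (μ : Measure Ω) (a b c d : Ω → ℝ) :
    K μ a b c d = K μ a d c b := by
  unfold K
  have e1 : (fun ω => a ω * b ω * c ω * d ω) = fun ω => a ω * d ω * c ω * b ω := by
    funext ω; ring
  have e2 : (fun ω => c ω * d ω) = fun ω => d ω * c ω := by funext ω; ring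
  have e3 : (fun ω => b ω * d ω) = fun ω => d ω * b ω := by funext ω; ring
  have e4 : (fun ω => b ω * c ω) = fun ω => c ω * b ω := by funext ω; ring
  rw [e1, e2, e3, e4]; ring

lemma K_swap23 {Ω : Type*} [MeasurableSpace Ω] (μ : Measure Ω) (a b c d : Ω → ℝ) :
    K μ a b c d = K μ a c b d := by
  rw [K_swap24, K_swap34, K_swap24]

lemma four_int {Ω : Type*} [MeasurableSpace Ω] {μ : Measure Ω}
    {a b c d : Ω → ℝ} (ha : Measurable a) (hb : Measurable b) (hc : Measurable c)
    (hd : Measurable d) (ha4 : Integrable (fun ω => a ω ^ 4) μ)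
    (hb4 : Integrable (fun ω => b ω ^ 4) μ) (hc4 : Integrable (fun ω => c ω ^ 4) μ)
    (hd4 : Integrable (fun ω => d ω ^ 4) μ) :
    Integrable (fun ω => a ω * b ω * c ω * d ω) μ := by
  refine (((ha4.add hb4).add hc4).add hd4).mono' (by fun_prop) (.of_forall fun ω => ?_)
  simp only [Real.norm_eq_abs, Pi.add_apply]
  rw [abs_le]
  constructor <;>
  nlinarith [sq_nonneg (a ω * b ω - c ω * d ω), sq_nonneg (a ω * b ω + c ω * d ω),
    sq_nonneg (a ω ^ 2 - b ω ^ 2), sq_nonneg (c ω ^ 2 - d ω ^ 2),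
    sq_nonneg (a ω ^ 2), sq_nonneg (b ω ^ 2), sq_nonneg (c ω ^ 2), sq_nonneg (d ω ^ 2)]

lemma two_int {Ω : Type*} [MeasurableSpace Ω] {μ : Measure Ω} [IsProbabilityMeasure μ]
    {a b : Ω → ℝ} (ha : Measurable a) (hb : Measurable b)
    (ha4 : Integrable (fun ω => a ω ^ 4) μ) (hb4 : Integrable (fun ω => b ω ^ 4) μ) :
    Integrable (fun ω => a ω * b ω) μ := by
  have := four_int (c := fun _ => 1) (d := fun _ => 1) ha hb measurable_const measurable_const
    ha4 hb4 (integrable_const _) (integrable_const _)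
  simpa using this

lemma four_bound {Ω : Type*} [MeasurableSpace Ω] {μ : Measure Ω}
    {a b c d : Ω → ℝ} (ha : Measurable a) (hb : Measurable b) (hc : Measurable c)
    (hd : Measurable d) (ha4 : Integrable (fun ω => a ω ^ 4) μ)
    (hb4 : Integrable (fun ω => b ω ^ 4) μ) (hc4 : Integrable (fun ω => c ω ^ 4) μ)
    (hd4 : Integrable (fun ω => d ω ^ 4) μ) :
    ∫ ω, a ω * b ω * c ω * d ω ∂μ ≤ ((∫ ω, a ω ^ 4 ∂μ) + (∫ ω, b ω ^ 4 ∂μ)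
      + (∫ ω, c ω ^ 4 ∂μ) + ∫ ω, d ω ^ 4 ∂μ) / 4 := by
  have h : ∫ ω, (a ω ^ 4 + b ω ^ 4 + c ω ^ 4 + d ω ^ 4) / 4 ∂μ =
      ((∫ ω, a ω ^ 4 ∂μ) + (∫ ω, b ω ^ 4 ∂μ)
      + (∫ ω, c ω ^ 4 ∂μ) + ∫ ω, d ω ^ 4 ∂μ) / 4 := by
    have h12 : Integrable (fun ω => a ω ^ 4 + b ω ^ 4) μ := ha4.add hb4
    have h123 : Integrable (fun ω => a ω ^ 4 + b ω ^ 4 + c ω ^ 4) μ := h12.add hc4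
    rw [integral_div, integral_add h123 hd4, integral_add h12 hc4, integral_add ha4 hb4]
  rw [← h]
  refine integral_mono (four_int ha hb hc hd ha4 hb4 hc4 hd4)
    ((((ha4.add hb4).add hc4).add hd4).div_const 4) fun ω => ?_
  simp only []
  nlinarith [sq_nonneg (a ω * b ω - c ω * d ω),
    sq_nonneg (a ω ^ 2 - b ω ^ 2), sq_nonneg (c ω ^ 2 - d ω ^ 2)]

lemma two_bound {Ω : Type*} [MeasurableSpace Ω] {μ : Measure Ω} [IsProbabilityMeasure μ]
    {a b : Ω → ℝ} (ha : Measurable a) (hb : Measurable b)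
    (ha4 : Integrable (fun ω => a ω ^ 4) μ) (hb4 : Integrable (fun ω => b ω ^ 4) μ) :
    (∫ ω, a ω * b ω ∂μ) ^ 2 ≤ ((∫ ω, a ω ^ 4 ∂μ) + ∫ ω, b ω ^ 4 ∂μ) / 2 := by
  have hab := two_int ha hb ha4 hb4
  set p := ∫ ω, a ω * b ω ∂μ with hp
  have h1 : ∫ ω, (a ω ^ 4 + b ω ^ 4) / 2 ∂μ = ((∫ ω, a ω ^ 4 ∂μ) + ∫ ω, b ω ^ 4 ∂μ) / 2 := by
    rw [integral_div, integral_add ha4 hb4]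
  have h2 : ∫ ω, (2 * p * (a ω * b ω) - p ^ 2) ∂μ = p ^ 2 := by
    rw [integral_sub (hab.const_mul _) (integrable_const _), integral_const_mul, ← hp]
    simp; ring
  rw [← h1, ← h2]
  refine integral_mono ((hab.const_mul _).sub (integrable_const _))
    ((ha4.add hb4).div_const 2) fun ω => ?_
  simp only []
  nlinarith [sq_nonneg (a ω * b ω - p), sq_nonneg (a ω ^ 2 - b ω ^ 2)]

lemma K_bound {Ω : Type*} [MeasurableSpace Ω] {μ : Measure Ω} [IsProbabilityMeasure μ]
    {a b c d : Ω → ℝ} (ha : Measurable a) (hb : Measurable b) (hc : Measurable c)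
    (hd : Measurable d) (ha4 : Integrable (fun ω => a ω ^ 4) μ)
    (hb4 : Integrable (fun ω => b ω ^ 4) μ) (hc4 : Integrable (fun ω => c ω ^ 4) μ)
    (hd4 : Integrable (fun ω => d ω ^ 4) μ) :
    K μ a b c d ≤ (∫ ω, a ω ^ 4 ∂μ) + (∫ ω, b ω ^ 4 ∂μ)
      + (∫ ω, c ω ^ 4 ∂μ) + ∫ ω, d ω ^ 4 ∂μ := by
  unfold K
  have h0 := four_bound ha hb hc hd ha4 hb4 hc4 hd4
  have h1 := two_bound ha hb ha4 hb4
  have h2 := two_bound hc hd hc4 hd4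
  have h3 := two_bound ha hc ha4 hc4
  have h4 := two_bound hb hd hb4 hd4
  have h5 := two_bound ha hd ha4 hd4
  have h6 := two_bound hb hc hb4 hc4
  have key : ∀ p q : ℝ, -(p * q) ≤ (p ^ 2 + q ^ 2) / 2 := fun p q => by
    nlinarith [sq_nonneg (p + q)]
  have k1 := key (∫ ω, a ω * b ω ∂μ) (∫ ω, c ω * d ω ∂μ)
  have k2 := key (∫ ω, a ω * c ω ∂μ) (∫ ω, b ω * d ω ∂μ)
  have k3 := key (∫ ω, a ω * d ω ∂μ) (∫ ω, b ω * c ω ∂μ)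
  linarith

lemma K_zero {Ω : Type*} [MeasurableSpace Ω] {μ : Measure Ω}
    {ι : Type*} [Fintype ι] [DecidableEq ι]
    (X : ι → Ω → ℝ) (A : ι → Finset ι) (Bs Cs Ds : Finset ι) (i : ι)
    (hiB : i ∈ Bs) (hBC : Bs ⊆ Cs) (hCD : Cs ⊆ Ds)
    (hLD3 : IndepFun (fun ω => fun j : (A i : Finset ι) => X j.1 ω)
      (fun ω => fun l : ((Bs)ᶜ : Finset ι) =>
        fun j : (A l.1 : Finset ι) => X j.1 ω) μ)
    (hLD4 : IndepFun (fun ω => fun l : (Bs : Finset ι) =>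
        fun j : (A l.1 : Finset ι) => X j.1 ω)
      (fun ω => fun l : ((Cs)ᶜ : Finset ι) =>
        fun j : (A l.1 : Finset ι) => X j.1 ω) μ)
    (hLD5 : IndepFun (fun ω => fun l : (Cs : Finset ι) =>
        fun j : (A l.1 : Finset ι) => X j.1 ω)
      (fun ω => fun l : ((Ds)ᶜ : Finset ι) =>
        fun j : (A l.1 : Finset ι) => X j.1 ω) μ)
    {a b c d : Ω → ℝ} {j k l : ι}
    (ma : Measurable a) (mb : Measurable b) (mc : Measurable c) (md : Measurable d)
    (ha : MF (fun ω => fun j : (A i : Finset ι) => X j.1 ω) a)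
    (hb : MF (fun ω => fun j' : (A j : Finset ι) => X j'.1 ω) b)
    (hc : MF (fun ω => fun j : (A k : Finset ι) => X j.1 ω) c)
    (hd : MF (fun ω => fun j : (A l : Finset ι) => X j.1 ω) d)
    (a0 : ∫ ω, a ω ∂μ = 0) (d0 : ∫ ω, d ω ∂μ = 0)
    (hl : l ∉ Ds) : K μ a b c d = 0 := by
  have hlC : l ∉ Cs := fun h => hl (hCD h)
  have hlB : l ∉ Bs := fun h => hlC (hBC h)
  have hiC := hBC hiB
  have cm : ∀ {s : Finset ι} {x : ι}, x ∉ s → x ∈ sᶜ := fun h => Finset.mem_compl.2 h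
  -- product of `a` with something off `Bs`
  have aB : ∀ {f : Ω → ℝ} {m : ι}, Measurable f →
      MF (fun ω => fun j : (A m : Finset ι) => X j.1 ω) f → m ∉ Bs →
      ∫ ω, a ω * f ω ∂μ = 0 := fun mf hf hm => by
    rw [MF.indep hLD3 ha (hf.lift (cm hm)) ma mf, a0, zero_mul]
  -- product of something in `Cs` with `d`
  have Cd : ∀ {f : Ω → ℝ} {m : ι}, Measurable f →
      MF (fun ω => fun j : (A m : Finset ι) => X j.1 ω) f → m ∈ Cs →
      ∫ ω, f ω * d ω ∂μ = 0 := fun mf hf hm => by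
    rw [MF.indep hLD5 (hf.lift hm) (hd.lift (cm hl)) mf md, d0, mul_zero]
  have ad := aB md hd hlB
  -- triples in `Cs`
  have tripC : j ∈ Cs → k ∈ Cs → K μ a b c d = 0 := fun hj hk => by
    unfold K
    have h := MF.indep hLD5 (((ha.lift hiC).mul (hb.lift hj)).mul (hc.lift hk))
      (hd.lift (cm hl)) ((ma.mul mb).mul mc) md
    rw [h, Cd mb hb hj, Cd mc hc hk, d0, ad]; ring
  by_cases hj : j ∈ Bs
  · by_cases hk : k ∈ Cs
    · exact tripC (hBC hj) hk
    · unfold K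
      have h := MF.indep hLD4 ((ha.lift hiB).mul (hb.lift hj))
        ((hc.lift (cm hk)).mul (hd.lift (cm hlC))) (ma.mul mb) (mc.mul md)
      have e : (fun ω => a ω * b ω * c ω * d ω) = fun ω => a ω * b ω * (c ω * d ω) := by
        funext ω; ring
      rw [e, h, ad, aB mc hc (fun h => hk (hBC h))]; ring
  · by_cases hk : k ∈ Bs
    · by_cases hj' : j ∈ Cs
      · exact tripC hj' (hBC hk)
      · unfold K
        have h := MF.indep hLD4 ((ha.lift hiB).mul (hc.lift hk))
          ((hb.lift (cm hj')).mul (hd.lift (cm hlC))) (ma.mul mc) (mb.mul md)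
        have e : (fun ω => a ω * b ω * c ω * d ω) = fun ω => a ω * c ω * (b ω * d ω) := by
          funext ω; ring
        rw [e, h, ad, aB mb hb hj]; ring
    · unfold K
      have h := MF.indep hLD3 ha
        (((hb.lift (cm hj)).mul (hc.lift (cm hk))).mul (hd.lift (cm hlB))) ma
        ((mb.mul mc).mul md)
      have e : (fun ω => a ω * b ω * c ω * d ω) = fun ω => a ω * (b ω * c ω * d ω) := by
        funext ω; ring
      rw [e, h, ad, aB mb hb hj, aB mc hc hk, a0]; ring

lemma cauchy {Ω : Type*} [MeasurableSpace Ω] {μ : Measure Ω} {T S : Ω → ℝ}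
    (hTT : Integrable (fun ω => T ω * T ω) μ) (hTS : Integrable (fun ω => T ω * S ω) μ)
    (hSS : Integrable (fun ω => S ω * S ω) μ) :
    (∫ ω, T ω * S ω ∂μ) ^ 2 ≤ (∫ ω, T ω * T ω ∂μ) * ∫ ω, S ω * S ω ∂μ := by
  have h : ∀ t : ℝ, 0 ≤ (∫ ω, S ω * S ω ∂μ) * (t * t) + (2 * ∫ ω, T ω * S ω ∂μ) * t
      + ∫ ω, T ω * T ω ∂μ := fun t => by
    have e : ∫ ω, ((t * t) * (S ω * S ω) + (2 * t) * (T ω * S ω) + T ω * T ω) ∂μ =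
        (∫ ω, S ω * S ω ∂μ) * (t * t) + (2 * ∫ ω, T ω * S ω ∂μ) * t
        + ∫ ω, T ω * T ω ∂μ := by
      have h12 : Integrable (fun ω => (t * t) * (S ω * S ω) + (2 * t) * (T ω * S ω)) μ :=
        (hSS.const_mul _).add (hTS.const_mul _)
      rw [integral_add h12 hTT,
        integral_add (hSS.const_mul _) (hTS.const_mul _), integral_const_mul,
        integral_const_mul]
      ring
    rw [← e]
    exact integral_nonneg fun ω => by
      show 0 ≤ (t * t) * (S ω * S ω) + (2 * t) * (T ω * S ω) + T ω * T ω
      nlinarith [sq_nonneg (t * S ω + T ω)]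
  have := discrim_le_zero h
  unfold discrim at this
  nlinarith

lemma count {ι : Type*} [Fintype ι] (u : ι → ι → ℝ) (x y : ι → ℝ) (κ : ℝ)
    (hu : ∀ i j, 0 ≤ u i j) (hx : ∀ i, 0 ≤ x i) (hy : ∀ i, 0 ≤ y i)
    (h1 : ∀ i, ∑ j, u i j ≤ κ) (h2 : ∀ j, ∑ i, u i j ≤ κ) (hκ : 0 ≤ κ) :
    ∑ i, ∑ j, ∑ k, ∑ l, u i j * u i k * u i l * (x i + x j + y k + y l) ≤
      2 * κ ^ 3 * ∑ i, (x i + y i) := by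
  have inner : ∀ i, ∑ j, ∑ k, ∑ l, u i j * u i k * u i l * (x i + x j + y k + y l) =
      (∑ j, u i j) ^ 3 * x i + (∑ j, u i j) ^ 2 * (∑ j, u i j * x j)
      + 2 * (∑ j, u i j) ^ 2 * (∑ j, u i j * y j) := fun i => by
    have e : ∀ j k l, u i j * u i k * u i l * (x i + x j + y k + y l) =
        x i * (u i j * (u i k * u i l)) + (u i j * x j) * (u i k * u i l)
        + u i j * ((u i k * y k) * u i l) + u i j * (u i k * (u i l * y l)) := fun j k l => by
      ring
    simp only [e, Finset.sum_add_distrib, ← Finset.mul_sum, ← Finset.sum_mul]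
    ring
  have hd : ∀ i, 0 ≤ ∑ j, u i j := fun i => Finset.sum_nonneg fun j _ => hu i j
  have hw : ∀ z : ι → ℝ, (∀ i, 0 ≤ z i) → ∀ i, 0 ≤ ∑ j, u i j * z j := fun z hz i =>
    Finset.sum_nonneg fun j _ => mul_nonneg (hu i j) (hz j)
  have hswap : ∀ z : ι → ℝ, (∀ i, 0 ≤ z i) → ∑ i, ∑ j, u i j * z j ≤ κ * ∑ j, z j :=
    fun z hz => by
      rw [Finset.sum_comm, Finset.mul_sum]
      refine Finset.sum_le_sum fun j _ => ?_
      rw [← Finset.sum_mul]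
      exact mul_le_mul_of_nonneg_right (h2 j) (hz j)
  calc _ ≤ ∑ i, (κ ^ 3 * x i + κ ^ 2 * (∑ j, u i j * x j)
        + 2 * κ ^ 2 * (∑ j, u i j * y j)) := by
        refine Finset.sum_le_sum fun i _ => ?_
        rw [inner i]
        have p3 := pow_le_pow_left₀ (hd i) (h1 i) 3
        have p2 := pow_le_pow_left₀ (hd i) (h1 i) 2
        have q1 := mul_le_mul_of_nonneg_right p3 (hx i)
        have q2 := mul_le_mul_of_nonneg_right p2 (hw x hx i)
        have q3 := mul_le_mul_of_nonneg_right p2 (hw y hy i)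
        linarith
    _ = κ ^ 3 * (∑ i, x i) + κ ^ 2 * (∑ i, ∑ j, u i j * x j)
        + 2 * κ ^ 2 * (∑ i, ∑ j, u i j * y j) := by
        simp only [Finset.sum_add_distrib, ← Finset.mul_sum]
    _ ≤ 2 * κ ^ 3 * ∑ i, (x i + y i) := by
        rw [Finset.sum_add_distrib]
        have q2 := mul_le_mul_of_nonneg_left (hswap x hx) (sq_nonneg κ)
        have q3 := mul_le_mul_of_nonneg_left (hswap y hy) (sq_nonneg κ)
        nlinarith

end Stmt16

open Stmt16 in
theorem stmt_16
    {Ω : Type*} [MeasurableSpace Ω] {μ : Measure Ω} [IsProbabilityMeasure μ]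
    {ι : Type*} [Fintype ι] [DecidableEq ι]
    (X : ι → Ω → ℝ) (A B Bstar Cstar Dstar : ι → Finset ι)
    (hXmeas : ∀ i, Measurable (X i))
    (hiA : ∀ i, i ∈ A i) (hAB : ∀ i, A i ⊆ B i) (hBBstar : ∀ i, B i ⊆ Bstar i)
    (hBstarCstar : ∀ i, Bstar i ⊆ Cstar i) (hCstarDstar : ∀ i, Cstar i ⊆ Dstar i)
    (hLD1 : ∀ i, IndepFun (X i) (fun ω => fun j : ((A i)ᶜ : Finset ι) => X j.1 ω) μ)
    (hLD2 : ∀ i, IndepFun (fun ω => fun j : (A i : Finset ι) => X j.1 ω)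
      (fun ω => fun j : ((B i)ᶜ : Finset ι) => X j.1 ω) μ)
    (hLD3 : ∀ i, IndepFun (fun ω => fun j : (A i : Finset ι) => X j.1 ω)
      (fun ω => fun l : ((Bstar i)ᶜ : Finset ι) =>
        fun j : (A l.1 : Finset ι) => X j.1 ω) μ)
    (hLD4 : ∀ i, IndepFun (fun ω => fun l : (Bstar i : Finset ι) =>
        fun j : (A l.1 : Finset ι) => X j.1 ω)
      (fun ω => fun l : ((Cstar i)ᶜ : Finset ι) =>
        fun j : (A l.1 : Finset ι) => X j.1 ω) μ)
    (hLD5 : ∀ i, IndepFun (fun ω => fun l : (Cstar i : Finset ι) =>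
        fun j : (A l.1 : Finset ι) => X j.1 ω)
      (fun ω => fun l : ((Dstar i)ᶜ : Finset ι) =>
        fun j : (A l.1 : Finset ι) => X j.1 ω) μ)
    (ξ η : ι → Ω → ℝ)
    (hξfun : ∀ i, ∃ g : ℝ → ℝ, Measurable g ∧ ∀ ω, ξ i ω = g (X i ω))
    (hξmean : ∀ i, ∫ ω, ξ i ω ∂μ = 0)
    (hξ4 : ∀ i, Integrable (fun ω => (ξ i ω) ^ 4) μ)
    (hηfun : ∀ i, ∃ g : (↥(A i) → ℝ) → ℝ, Measurable g ∧
      ∀ ω, η i ω = g (fun j => X j.1 ω))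
    (hηmean : ∀ i, ∫ ω, η i ω ∂μ = 0)
    (hη4 : ∀ i, Integrable (fun ω => (η i ω) ^ 4) μ)
    (T S : Ω → ℝ) (hT : ∀ ω, T ω = ∑ i, ξ i ω) (hS : ∀ ω, S ω = ∑ i, η i ω)
    (κ₂ : ℕ)
    (hκ₂ : κ₂ = Finset.univ.sup fun i => max (Dstar i).card
      (Finset.univ.filter fun j => i ∈ Dstar j).card) :
    (∫ ω, (T ω) ^ 2 * (S ω) ^ 2 ∂μ) ≤
      3 * (∫ ω, (T ω) ^ 2 ∂μ) * (∫ ω, (S ω) ^ 2 ∂μ) +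
        12 * (κ₂ : ℝ) ^ 3 * ∑ i, ((∫ ω, |ξ i ω| ^ 4 ∂μ) + ∫ ω, |η i ω| ^ 4 ∂μ) := by
  have mV : ∀ i, Measurable (fun ω => fun j : (A i : Finset ι) => X j.1 ω) := fun i =>
    measurable_pi_lambda _ fun j => hXmeas _
  have mξ : ∀ i, Measurable (ξ i) := fun i => by
    obtain ⟨g, hg, h⟩ := hξfun i
    rw [show ξ i = fun ω => g (X i ω) from funext h]
    exact hg.comp (hXmeas i)
  have mη : ∀ i, Measurable (η i) := fun i => by
    obtain ⟨g, hg, h⟩ := hηfun i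
    rw [show η i = fun ω => g (fun j : (A i : Finset ι) => X j.1 ω) from funext h]
    exact hg.comp (mV i)
  have fξ : ∀ i, MF (fun ω => fun j : (A i : Finset ι) => X j.1 ω) (ξ i) := fun i => by
    obtain ⟨g, hg, h⟩ := hξfun i
    exact ⟨fun w => g (w ⟨i, hiA i⟩), hg.comp (measurable_pi_apply _), h⟩
  have fη : ∀ i, MF (fun ω => fun j : (A i : Finset ι) => X j.1 ω) (η i) := fun i => hηfun i
  have hiB : ∀ i, i ∈ Bstar i := fun i => hBBstar i (hAB i (hiA i))
  -- vanishing
  have zero : ∀ i j k l, (j ∉ Dstar i ∨ k ∉ Dstar i ∨ l ∉ Dstar i) →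
      K μ (ξ i) (ξ j) (η k) (η l) = 0 := fun i j k l h => by
    rcases h with h | h | h
    · rw [K_swap24]
      exact K_zero X A _ _ _ i (hiB i) (hBstarCstar i) (hCstarDstar i) (hLD3 i) (hLD4 i)
        (hLD5 i) (mξ i) (mη l) (mη k) (mξ j) (fξ i) (fη l) (fη k) (fξ j) (hξmean i)
        (hξmean j) h
    · rw [K_swap34]
      exact K_zero X A _ _ _ i (hiB i) (hBstarCstar i) (hCstarDstar i) (hLD3 i) (hLD4 i)
        (hLD5 i) (mξ i) (mξ j) (mη l) (mη k) (fξ i) (fξ j) (fη l) (fη k) (hξmean i)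
        (hηmean k) h
    · exact K_zero X A _ _ _ i (hiB i) (hBstarCstar i) (hCstarDstar i) (hLD3 i) (hLD4 i)
        (hLD5 i) (mξ i) (mξ j) (mη k) (mη l) (fξ i) (fξ j) (fη k) (fη l) (hξmean i)
        (hηmean l) h
  -- expansions
  have iξξ : ∀ i j, Integrable (fun ω => ξ i ω * ξ j ω) μ := fun i j =>
    two_int (mξ i) (mξ j) (hξ4 i) (hξ4 j)
  have iξη : ∀ i j, Integrable (fun ω => ξ i ω * η j ω) μ := fun i j =>
    two_int (mξ i) (mη j) (hξ4 i) (hη4 j)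
  have iηη : ∀ i j, Integrable (fun ω => η i ω * η j ω) μ := fun i j =>
    two_int (mη i) (mη j) (hη4 i) (hη4 j)
  have i4 : ∀ i j k l, Integrable (fun ω => ξ i ω * ξ j ω * η k ω * η l ω) μ :=
    fun i j k l => four_int (mξ i) (mξ j) (mη k) (mη l) (hξ4 i) (hξ4 j) (hη4 k) (hη4 l)
  have eTT : (fun ω => T ω * T ω) = fun ω => ∑ i, ∑ j, ξ i ω * ξ j ω := by
    funext ω; rw [hT, Finset.sum_mul_sum]
  have eTS : (fun ω => T ω * S ω) = fun ω => ∑ i, ∑ j, ξ i ω * η j ω := by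
    funext ω; rw [hT, hS, Finset.sum_mul_sum]
  have eSS : (fun ω => S ω * S ω) = fun ω => ∑ i, ∑ j, η i ω * η j ω := by
    funext ω; rw [hS, Finset.sum_mul_sum]
  have e4 : (fun ω => T ω ^ 2 * S ω ^ 2) = fun ω => ∑ i, ∑ j, ∑ k, ∑ l,
      ξ i ω * ξ j ω * η k ω * η l ω := by
    funext ω
    simp only [← Finset.mul_sum, ← Finset.sum_mul, ← hT, ← hS]
    ring
  have iTT : Integrable (fun ω => T ω * T ω) μ := by
    rw [eTT]
    exact integrable_finsetSum _ fun i _ => integrable_finsetSum _ fun j _ => iξξ i j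
  have iTS : Integrable (fun ω => T ω * S ω) μ := by
    rw [eTS]
    exact integrable_finsetSum _ fun i _ => integrable_finsetSum _ fun j _ => iξη i j
  have iSS : Integrable (fun ω => S ω * S ω) μ := by
    rw [eSS]
    exact integrable_finsetSum _ fun i _ => integrable_finsetSum _ fun j _ => iηη i j
  have sTT : ∫ ω, T ω * T ω ∂μ = ∑ i, ∑ j, ∫ ω, ξ i ω * ξ j ω ∂μ := by
    rw [eTT, integral_finsetSum _ fun i _ => integrable_finsetSum _ fun j _ => iξξ i j]
    exact Finset.sum_congr rfl fun i _ => integral_finsetSum _ fun j _ => iξξ i j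
  have sTS : ∫ ω, T ω * S ω ∂μ = ∑ i, ∑ j, ∫ ω, ξ i ω * η j ω ∂μ := by
    rw [eTS, integral_finsetSum _ fun i _ => integrable_finsetSum _ fun j _ => iξη i j]
    exact Finset.sum_congr rfl fun i _ => integral_finsetSum _ fun j _ => iξη i j
  have sSS : ∫ ω, S ω * S ω ∂μ = ∑ i, ∑ j, ∫ ω, η i ω * η j ω ∂μ := by
    rw [eSS, integral_finsetSum _ fun i _ => integrable_finsetSum _ fun j _ => iηη i j]
    exact Finset.sum_congr rfl fun i _ => integral_finsetSum _ fun j _ => iηη i j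
  have s4 : ∫ ω, T ω ^ 2 * S ω ^ 2 ∂μ = ∑ i, ∑ j, ∑ k, ∑ l,
      ∫ ω, ξ i ω * ξ j ω * η k ω * η l ω ∂μ := by
    rw [e4, integral_finsetSum _ fun i _ => integrable_finsetSum _ fun j _ =>
      integrable_finsetSum _ fun k _ => integrable_finsetSum _ fun l _ => i4 i j k l]
    refine Finset.sum_congr rfl fun i _ => ?_
    rw [integral_finsetSum _ fun j _ =>
      integrable_finsetSum _ fun k _ => integrable_finsetSum _ fun l _ => i4 i j k l]
    refine Finset.sum_congr rfl fun j _ => ?_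
    rw [integral_finsetSum _ fun k _ => integrable_finsetSum _ fun l _ => i4 i j k l]
    exact Finset.sum_congr rfl fun k _ => integral_finsetSum _ fun l _ => i4 i j k l
  have main : ∫ ω, T ω ^ 2 * S ω ^ 2 ∂μ =
      (∫ ω, T ω * T ω ∂μ) * (∫ ω, S ω * S ω ∂μ) + 2 * (∫ ω, T ω * S ω ∂μ) ^ 2
      + ∑ i, ∑ j, ∑ k, ∑ l, K μ (ξ i) (ξ j) (η k) (η l) := by
    have t1 : (∫ ω, T ω * T ω ∂μ) * (∫ ω, S ω * S ω ∂μ) = ∑ i, ∑ j, ∑ k, ∑ l,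
        (∫ ω, ξ i ω * ξ j ω ∂μ) * ∫ ω, η k ω * η l ω ∂μ := by
      simp only [← Finset.mul_sum, ← Finset.sum_mul]
      rw [sTT, sSS]
    have t2 : (∫ ω, T ω * S ω ∂μ) ^ 2 = ∑ i, ∑ j, ∑ k, ∑ l,
        (∫ ω, ξ i ω * η k ω ∂μ) * ∫ ω, ξ j ω * η l ω ∂μ := by
      rw [pow_two, sTS, Finset.sum_mul_sum]
      refine Finset.sum_congr rfl fun i _ => Finset.sum_congr rfl fun j _ => ?_
      rw [Finset.sum_mul_sum]
    have t3 : (∫ ω, T ω * S ω ∂μ) ^ 2 = ∑ i, ∑ j, ∑ k, ∑ l,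
        (∫ ω, ξ i ω * η l ω ∂μ) * ∫ ω, ξ j ω * η k ω ∂μ := by
      rw [t2]
      exact Finset.sum_congr rfl fun i _ => Finset.sum_congr rfl fun j _ => Finset.sum_comm
    have t4 : ∑ i, ∑ j, ∑ k, ∑ l, K μ (ξ i) (ξ j) (η k) (η l) =
        (∫ ω, T ω ^ 2 * S ω ^ 2 ∂μ) - (∫ ω, T ω * T ω ∂μ) * (∫ ω, S ω * S ω ∂μ)
        - (∫ ω, T ω * S ω ∂μ) ^ 2 - (∫ ω, T ω * S ω ∂μ) ^ 2 := by
      nth_rw 2 [t3]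
      rw [s4, t1, t2]
      simp only [K, Finset.sum_sub_distrib]
    rw [t4]; ring
  -- bounding the cumulants
  set x : ι → ℝ := fun i => ∫ ω, ξ i ω ^ 4 ∂μ with hx
  set y : ι → ℝ := fun i => ∫ ω, η i ω ^ 4 ∂μ with hy
  have hx0 : ∀ i, 0 ≤ x i := fun i => integral_nonneg fun ω => by
    show 0 ≤ ξ i ω ^ 4
    positivity
  have hy0 : ∀ i, 0 ≤ y i := fun i => integral_nonneg fun ω => by
    show 0 ≤ η i ω ^ 4
    positivity
  have hκi : ∀ i, max (Dstar i).card (Finset.univ.filter fun j => i ∈ Dstar j).card ≤ κ₂ :=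
    fun i => by
      rw [hκ₂]
      exact Finset.le_sup (f := fun i => max (Dstar i).card
        (Finset.univ.filter fun j => i ∈ Dstar j).card) (Finset.mem_univ i)
  have cnt := count (fun i j => if j ∈ Dstar i then (1 : ℝ) else 0) x y (κ₂ : ℝ)
    (fun i j => by split_ifs <;> norm_num) hx0 hy0
    (fun i => by
      have := (le_max_left _ _).trans (hκi i)
      simpa using this)
    (fun j => by
      have := (le_max_right _ _).trans (hκi j)
      rw [Finset.sum_boole]
      exact_mod_cast this)
    (Nat.cast_nonneg _)
  have bd : ∑ i, ∑ j, ∑ k, ∑ l, K μ (ξ i) (ξ j) (η k) (η l) ≤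
      2 * (κ₂ : ℝ) ^ 3 * ∑ i, (x i + y i) := by
    refine le_trans (Finset.sum_le_sum fun i _ => Finset.sum_le_sum fun j _ =>
      Finset.sum_le_sum fun k _ => Finset.sum_le_sum fun l _ => ?_) cnt
    by_cases hj : j ∈ Dstar i
    · by_cases hk : k ∈ Dstar i
      · by_cases hl : l ∈ Dstar i
        · have := K_bound (mξ i) (mξ j) (mη k) (mη l) (hξ4 i) (hξ4 j) (hη4 k) (hη4 l)
          simpa [hj, hk, hl] using this
        · simp [zero i j k l (Or.inr (Or.inr hl)), hl]
      · simp [zero i j k l (Or.inr (Or.inl hk)), hk]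
    · simp [zero i j k l (Or.inl hj), hj]
  have cs := cauchy iTT iTS iSS
  have ex : ∀ i, ∫ ω, |ξ i ω| ^ 4 ∂μ = x i := fun i => by
    simp only [hx, Even.pow_abs (show Even 4 by decide)]
  have ey : ∀ i, ∫ ω, |η i ω| ^ 4 ∂μ = y i := fun i => by
    simp only [hy, Even.pow_abs (show Even 4 by decide)]
  simp only [ex, ey]
  have pT : ∫ ω, T ω ^ 2 ∂μ = ∫ ω, T ω * T ω ∂μ := by simp only [pow_two]
  have pS : ∫ ω, S ω ^ 2 ∂μ = ∫ ω, S ω * S ω ∂μ := by simp only [pow_two]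
  rw [main, pT, pS]
  have nn : 0 ≤ (κ₂ : ℝ) ^ 3 * ∑ i, (x i + y i) :=
    mul_nonneg (by positivity) (Finset.sum_nonneg fun i _ => add_nonneg (hx0 i) (hy0 i))
  linarith
end

section
/- Assume condition (LD4*), let κ = max_{i∈𝒥} max(|D_i*|, |{j ∈ 𝒥 : i ∈ D_j*}|) and τ = 1/(8κ). Define X̄_i = X_i·1{|X_i| ≤ τ}, W̄ = Σ_{i∈𝒥} X̄_i, Y_i = Σ_{j∈A_i} X_j, β₂ = Σ_{i∈𝒥} E X_i²·1{|X_i| > τ} and β₃ = Σ_{i∈𝒥} E|X_i|³·1{|X_i| ≤ τ}, and assume β₂ ≤ τ/16. Then there is an absolute constant C such that for every z ≥ 0, |P(W > z) − P(W̄ > z)| ≤ Σ_{i∈𝒥} P(|Y_i| > (z+1)/4) + C (z+1)^{−3} κ³ β₃ + 64 κ² β₂ {(1+z)^{−3} + P(W > (z−1)/2)}. -/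
open MeasureTheory ProbabilityTheory Real

lemma aux_count {ι : Type} [Fintype ι] [DecidableEq ι] (D : ι → Finset ι) (κ : ℕ)
    (h2 : ∀ j, (Finset.univ.filter fun i => j ∈ D i).card ≤ κ) (c : ι → ℝ) (hc : ∀ i, 0 ≤ c i) :
    ∑ i, ∑ j ∈ D i, c j ≤ κ * ∑ j, c j := by
  have : ∑ i, ∑ j ∈ D i, c j = ∑ j, ((Finset.univ.filter fun i => j ∈ D i).card : ℝ) * c j := by
    rw [Finset.sum_comm' (t' := Finset.univ) (s' := fun j => Finset.univ.filter fun i => j ∈ D i)]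
    · simp
    · intro x y; simp
  rw [this, Finset.mul_sum]
  refine Finset.sum_le_sum fun j _ => mul_le_mul_of_nonneg_right ?_ (hc j)
  exact_mod_cast h2 j

lemma aux_amgm (x y z : ℝ) (hx : 0 ≤ x) (hy : 0 ≤ y) (hz : 0 ≤ z) :
    x * y * z ≤ (x ^ 3 + y ^ 3 + z ^ 3) / 3 := by
  nlinarith [mul_nonneg (add_nonneg (add_nonneg hx hy) hz) (sq_nonneg (x - y)),
    mul_nonneg (add_nonneg (add_nonneg hx hy) hz) (sq_nonneg (x - z)),
    mul_nonneg (add_nonneg (add_nonneg hx hy) hz) (sq_nonneg (y - z))]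

lemma aux_comb {ι : Type} [Fintype ι] [DecidableEq ι] (D : ι → Finset ι) (κ : ℕ)
    (h1 : ∀ i, (D i).card ≤ κ)
    (h2 : ∀ j, (Finset.univ.filter fun i => j ∈ D i).card ≤ κ) (a b : ι → ℝ)
    (ha : ∀ i, 0 ≤ a i) (hb : ∀ i, 0 ≤ b i) :
    ∑ i, a i * (∑ j ∈ D i, a j) * (∑ k ∈ D i, b k)
      ≤ (κ : ℝ) ^ 2 * (2 / 3 * ∑ i, a i ^ 3 + 1 / 3 * ∑ i, b i ^ 3) := by
  have key : ∀ i, a i * (∑ j ∈ D i, a j) * (∑ k ∈ D i, b k) ≤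
      ((κ : ℝ) ^ 2 * a i ^ 3 + κ * (∑ j ∈ D i, a j ^ 3) + κ * ∑ k ∈ D i, b k ^ 3) / 3 := by
    intro i
    have hd : ((D i).card : ℝ) ≤ κ := by exact_mod_cast h1 i
    have hA : 0 ≤ ∑ j ∈ D i, a j ^ 3 := Finset.sum_nonneg fun j _ => pow_nonneg (ha j) 3
    have hB : 0 ≤ ∑ j ∈ D i, b j ^ 3 := Finset.sum_nonneg fun j _ => pow_nonneg (hb j) 3
    have h3 : 0 ≤ a i ^ 3 := pow_nonneg (ha i) 3
    calc a i * (∑ j ∈ D i, a j) * (∑ k ∈ D i, b k)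
        = ∑ j ∈ D i, ∑ k ∈ D i, a i * a j * b k := by
          rw [mul_assoc, Finset.sum_mul_sum, Finset.mul_sum]
          refine Finset.sum_congr rfl fun j _ => ?_
          rw [Finset.mul_sum]
          exact Finset.sum_congr rfl fun k _ => by ring
      _ ≤ ∑ j ∈ D i, ∑ k ∈ D i, (a i ^ 3 + a j ^ 3 + b k ^ 3) / 3 :=
          Finset.sum_le_sum fun j _ => Finset.sum_le_sum fun k _ =>
            aux_amgm _ _ _ (ha i) (ha j) (hb k)
      _ = (((D i).card : ℝ) ^ 2 * a i ^ 3 + (D i).card * (∑ j ∈ D i, a j ^ 3)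
            + (D i).card * ∑ k ∈ D i, b k ^ 3) / 3 := by
          simp_rw [← Finset.sum_div, Finset.sum_add_distrib, Finset.sum_const, nsmul_eq_mul,
            ← Finset.mul_sum]
          ring
      _ ≤ _ := by
          gcongr
  calc _ ≤ ∑ i, ((κ : ℝ) ^ 2 * a i ^ 3 + κ * (∑ j ∈ D i, a j ^ 3) + κ * ∑ k ∈ D i, b k ^ 3) / 3 :=
        Finset.sum_le_sum fun i _ => key i
    _ = ((κ : ℝ) ^ 2 * ∑ i, a i ^ 3 + κ * (∑ i, ∑ j ∈ D i, a j ^ 3)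
          + κ * ∑ i, ∑ k ∈ D i, b k ^ 3) / 3 := by
        simp_rw [← Finset.sum_div, Finset.sum_add_distrib, ← Finset.mul_sum]
    _ ≤ ((κ : ℝ) ^ 2 * ∑ i, a i ^ 3 + κ * (κ * ∑ j, a j ^ 3)
          + κ * (κ * ∑ k, b k ^ 3)) / 3 := by
        have := aux_count D κ h2 (fun j => a j ^ 3) fun j => pow_nonneg (ha j) 3
        have := aux_count D κ h2 (fun j => b j ^ 3) fun j => pow_nonneg (hb j) 3
        gcongr
    _ = _ := by ring

/-- bounded measurable functions -/
def BMeas {Ω : Type} [MeasurableSpace Ω] (f : Ω → ℝ) : Prop :=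
  Measurable f ∧ ∃ C : ℝ, ∀ ω, |f ω| ≤ C

namespace BMeas
variable {Ω : Type} [MeasurableSpace Ω] {f g : Ω → ℝ}

lemma int (μ : Measure Ω) [IsProbabilityMeasure μ] (h : BMeas f) : Integrable f μ := by
  obtain ⟨hm, C, hC⟩ := h
  exact Integrable.of_bound hm.aestronglyMeasurable C (Filter.Eventually.of_forall hC)

lemma const (c : ℝ) : BMeas (fun _ : Ω => c) := ⟨measurable_const, |c|, fun _ => le_rfl⟩

lemma add (hf : BMeas f) (hg : BMeas g) : BMeas (fun ω => f ω + g ω) := by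
  obtain ⟨hm, C, hC⟩ := hf
  obtain ⟨hm', C', hC'⟩ := hg
  exact ⟨hm.add hm', C + C', fun ω => (abs_add_le _ _).trans (add_le_add (hC ω) (hC' ω))⟩

lemma mul (hf : BMeas f) (hg : BMeas g) : BMeas (fun ω => f ω * g ω) := by
  obtain ⟨hm, C, hC⟩ := hf
  obtain ⟨hm', C', hC'⟩ := hg
  refine ⟨hm.mul hm', C * C', fun ω => ?_⟩
  rw [abs_mul]
  exact mul_le_mul (hC ω) (hC' ω) (abs_nonneg _) ((abs_nonneg _).trans (hC ω))

lemma abs (hf : BMeas f) : BMeas (fun ω => |f ω|) := by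
  obtain ⟨hm, C, hC⟩ := hf
  exact ⟨hm.abs, C, fun ω => by simpa using hC ω⟩

lemma sub (hf : BMeas f) (hg : BMeas g) : BMeas (fun ω => f ω - g ω) := by
  have := hf.add ((const (-1)).mul hg)
  simpa [sub_eq_add_neg] using this

lemma pow (hf : BMeas f) (n : ℕ) : BMeas (fun ω => f ω ^ n) := by
  obtain ⟨hm, C, hC⟩ := hf
  refine ⟨hm.pow_const n, C ^ n, fun ω => ?_⟩
  rw [abs_pow]
  exact pow_le_pow_left₀ (abs_nonneg _) (hC ω) n

lemma sum {ι : Type} {s : Finset ι} {F : ι → Ω → ℝ} (h : ∀ i ∈ s, BMeas (F i)) :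
    BMeas (fun ω => ∑ i ∈ s, F i ω) := by
  classical
  induction s using Finset.induction_on with
  | empty => simpa using const (Ω := Ω) 0
  | insert a s ha ih =>
    simp_rw [Finset.sum_insert ha]
    exact (h a (by simp)).add (ih fun i hi => h i (by simp [hi]))
end BMeas

lemma aux_jensen3 {Ω : Type} [MeasurableSpace Ω] (μ : Measure Ω) [IsProbabilityMeasure μ]
    {f : Ω → ℝ} (hf : BMeas f) (h0 : ∀ ω, 0 ≤ f ω) :
    (∫ ω, f ω ∂μ) ^ 3 ≤ ∫ ω, f ω ^ 3 ∂μ := by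
  set m := ∫ ω, f ω ∂μ with hm
  have hm0 : 0 ≤ m := integral_nonneg h0
  have h1 : ∫ ω, (m ^ 3 + 3 * m ^ 2 * (f ω - m)) ∂μ ≤ ∫ ω, f ω ^ 3 ∂μ := by
    refine integral_mono ?_ ((hf.pow 3).int μ) ?_
    · exact ((BMeas.const _).add ((BMeas.const _).mul (hf.sub (BMeas.const _)))).int μ
    · intro ω
      have := h0 ω
      have e : f ω ^ 3 - (m ^ 3 + 3 * m ^ 2 * (f ω - m)) = (f ω - m) ^ 2 * (f ω + 2 * m) := by ring
      have : 0 ≤ (f ω - m) ^ 2 * (f ω + 2 * m) := by positivity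
      simp only
      linarith
  have h2 : ∫ ω, (m ^ 3 + 3 * m ^ 2 * (f ω - m)) ∂μ = m ^ 3 := by
    rw [integral_add (integrable_const _), integral_const_mul,
      integral_sub (hf.int μ) (integrable_const _)]
    · simp [← hm]
    · exact ((BMeas.const _).mul (hf.sub (BMeas.const _))).int μ
  linarith

lemma aux_decouple {Ω : Type} [MeasurableSpace Ω] (μ : Measure Ω) [IsProbabilityMeasure μ]
    {U S TC : Ω → ℝ} (hU : BMeas U) (hS : BMeas S) (hTC : BMeas TC)
    (hU0 : ∀ ω, 0 ≤ U ω) (hb : ∀ ω, |TC ω| ≤ 1 / 4)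
    (hi : IndepFun U (fun ω => S ω - TC ω) μ) (hs : ∫ ω, |S ω| ∂μ ≤ 3 / 2) :
    ∫ ω, U ω * |S ω| ∂μ ≤ 2 * ∫ ω, U ω ∂μ := by
  have hi' : IndepFun U (fun ω => |S ω - TC ω|) μ :=
    hi.comp measurable_id (measurable_id.abs : Measurable fun x : ℝ => |x|)
  have hd := (hS.sub hTC).abs
  have e := hi'.integral_fun_mul_eq_mul_integral hU.1.aestronglyMeasurable
    hd.1.aestronglyMeasurable
  have h0 : 0 ≤ ∫ ω, U ω ∂μ := integral_nonneg hU0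
  have h1 : ∫ ω, |S ω - TC ω| ∂μ ≤ 7 / 4 := by
    have : ∫ ω, |S ω - TC ω| ∂μ ≤ ∫ ω, (|S ω| + 1 / 4) ∂μ := by
      refine integral_mono (hd.int μ) ((hS.abs.add (BMeas.const _)).int μ) fun ω => ?_
      have := abs_sub (S ω) (TC ω)
      have := hb ω
      simp only
      linarith
    rw [integral_add (hS.abs.int μ) (integrable_const _)] at this
    simp at this
    linarith
  have h2 : ∫ ω, U ω * |S ω| ∂μ ≤ ∫ ω, (U ω * |S ω - TC ω| + U ω * (1 / 4)) ∂μ := by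
    refine integral_mono ((hU.mul hS.abs).int μ)
      (((hU.mul hd).add (hU.mul (BMeas.const _))).int μ) fun ω => ?_
    have h3 : |S ω| ≤ |S ω - TC ω| + 1 / 4 := by
      have := abs_sub_abs_le_abs_sub (S ω) (TC ω)
      have := hb ω
      linarith
    simp only
    rw [← mul_add]
    exact mul_le_mul_of_nonneg_left h3 (hU0 ω)
  rw [integral_add ((hU.mul hd).int μ) ((hU.mul (BMeas.const _)).int μ), e,
    integral_mul_const] at h2
  nlinarith

lemma aux_fourth {Ω : Type} [MeasurableSpace Ω] (μ : Measure Ω) [IsProbabilityMeasure μ]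
    {ι : Type} [Fintype ι] [DecidableEq ι] (ζ T TB TC : ι → Ω → ℝ) (S : Ω → ℝ)
    (D : ι → Finset ι) (κ : ℕ)
    (h1 : ∀ i, (D i).card ≤ κ)
    (h2 : ∀ j, (Finset.univ.filter fun i => j ∈ D i).card ≤ κ)
    (hζ : ∀ i, BMeas (ζ i)) (hT : ∀ i, BMeas (T i)) (hTB : ∀ i, BMeas (TB i))
    (hTC : ∀ i, BMeas (TC i)) (hS : ∀ ω, S ω = ∑ i, ζ i ω)
    (hz : ∀ i, ∫ ω, ζ i ω ∂μ = 0)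
    (bT : ∀ i ω, |T i ω| ≤ ∑ j ∈ D i, |ζ j ω|)
    (bTB : ∀ i ω, |TB i ω| ≤ ∑ j ∈ D i, |ζ j ω|)
    (bR : ∀ i ω, ∑ j ∈ D i, |ζ j ω| ≤ 1 / 4)
    (bTC : ∀ i ω, |TC i ω| ≤ 1 / 4)
    (hi1 : ∀ i, IndepFun (ζ i) (fun ω => S ω - T i ω) μ)
    (hi2 : ∀ i, IndepFun (fun ω => (ζ i ω, T i ω)) (fun ω => S ω - TB i ω) μ)
    (hi3 : ∀ i, IndepFun (fun ω => (ζ i ω, T i ω, TB i ω)) (fun ω => S ω - TC i ω) μ)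
    (hσ : ∫ ω, S ω ^ 2 ∂μ ≤ 9 / 4) :
    ∫ ω, S ω ^ 4 ∂μ ≤ 3 * (∫ ω, S ω ^ 2 ∂μ) ^ 2 + 32 * κ ^ 2 * ∑ i, ∫ ω, |ζ i ω| ^ 3 ∂μ := by
  have bS : BMeas S := by
    have := BMeas.sum (s := Finset.univ) fun i (_ : i ∈ Finset.univ) => hζ i
    simpa only [← hS] using this
  set R : ι → Ω → ℝ := fun i ω => ∑ j ∈ D i, |ζ j ω| with hR
  have mR : ∀ i, BMeas (R i) := fun i => BMeas.sum fun j _ => (hζ j).abs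
  have R0 : ∀ i ω, 0 ≤ R i ω := fun i ω => Finset.sum_nonneg fun j _ => abs_nonneg _
  set σ2 := ∫ ω, S ω ^ 2 ∂μ with hσ2
  have hs : ∫ ω, |S ω| ∂μ ≤ 3 / 2 := by
    have : ∫ ω, |S ω| ∂μ ≤ ∫ ω, (S ω ^ 2 * (1 / 3) + 3 / 4) ∂μ := by
      refine integral_mono (bS.abs.int μ)
        ((((bS.pow 2).mul (BMeas.const _)).add (BMeas.const _)).int μ) fun ω => ?_
      simp only
      nlinarith [sq_nonneg (|S ω| - 3 / 2), sq_abs (S ω)]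
    rw [integral_add (((bS.pow 2).mul (BMeas.const _)).int μ) (integrable_const _),
      integral_mul_const] at this
    simp at this
    linarith
  set e : ι → ℝ := fun i => ∫ ω, ζ i ω * T i ω ∂μ with he
  set η : ι → Ω → ℝ := fun i ω => ζ i ω * T i ω - e i with hη
  have mη : ∀ i, BMeas (η i) := fun i => ((hζ i).mul (hT i)).sub (BMeas.const _)
  have η0 : ∀ i, ∫ ω, η i ω ∂μ = 0 := by
    intro i
    simp only [hη]
    rw [integral_sub (((hζ i).mul (hT i)).int μ) (integrable_const _)]
    simp [he]
  -- sum of e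
  have hsum : ∑ i, e i = σ2 := by
    have : ∀ i, ∫ ω, ζ i ω * S ω ∂μ = e i := by
      intro i
      have e1 : ∀ ω, ζ i ω * S ω = ζ i ω * (S ω - T i ω) + ζ i ω * T i ω := fun ω => by ring
      simp_rw [e1]
      rw [integral_add (((hζ i).mul (bS.sub (hT i))).int μ) (((hζ i).mul (hT i)).int μ),
        (hi1 i).integral_fun_mul_eq_mul_integral (hζ i).1.aestronglyMeasurable
          (bS.sub (hT i)).1.aestronglyMeasurable, hz i]
      simp [he]
    rw [hσ2, ← Finset.sum_congr rfl fun i _ => this i, ← integral_finsetSum]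
    · congr 1
      ext ω
      rw [← Finset.sum_mul, ← hS, sq]
    · intro i _
      exact ((hζ i).mul bS).int μ
  set G : ι → ℝ := fun i => ∫ ω, |ζ i ω| * R i ω * R i ω ∂μ with hG
  set H : ι → ℝ := fun i => (∫ ω, |ζ i ω| * R i ω ∂μ) * ∫ ω, R i ω ∂μ with hH
  have mζR : ∀ i, BMeas (fun ω => |ζ i ω| * R i ω) := fun i => (hζ i).abs.mul (mR i)
  -- bounds of the two error terms
  have b1 : ∀ i, ∫ ω, |η i ω * TB i ω| ∂μ ≤ G i + H i := by
    intro i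
    have he' : |e i| ≤ ∫ ω, |ζ i ω| * R i ω ∂μ := by
      refine (abs_integral_le_integral_abs).trans ?_
      refine integral_mono (((hζ i).mul (hT i)).abs.int μ) ((mζR i).int μ) fun ω => ?_
      simp only [abs_mul]
      exact mul_le_mul_of_nonneg_left (bT i ω) (abs_nonneg _)
    have : ∫ ω, |η i ω * TB i ω| ∂μ ≤
        ∫ ω, (|ζ i ω| * R i ω * R i ω + (∫ ω, |ζ i ω| * R i ω ∂μ) * R i ω) ∂μ := by
      refine integral_mono (((mη i).mul (hTB i)).abs.int μ)
        ((((mζR i).mul (mR i)).add ((BMeas.const _).mul (mR i))).int μ) fun ω => ?_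
      simp only [abs_mul]
      rw [← add_mul]
      refine mul_le_mul ?_ (bTB i ω) (abs_nonneg _) ?_
      · refine (abs_sub _ _).trans (add_le_add ?_ he')
        rw [abs_mul]
        exact mul_le_mul_of_nonneg_left (bT i ω) (abs_nonneg _)
      · exact add_nonneg (mul_nonneg (abs_nonneg _) (R0 i ω)) ((abs_nonneg _).trans he')
    rw [integral_add (((mζR i).mul (mR i)).int μ) (((BMeas.const _).mul (mR i)).int μ),
      integral_const_mul] at this
    exact this
  have b2 : ∀ i, ∫ ω, |ζ i ω| * T i ω ^ 2 ∂μ ≤ G i := by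
    intro i
    refine integral_mono (((hζ i).abs.mul ((hT i).pow 2)).int μ)
      (((mζR i).mul (mR i)).int μ) fun ω => ?_
    simp only
    rw [mul_assoc]
    refine mul_le_mul_of_nonneg_left ?_ (abs_nonneg _)
    rw [← sq_abs, sq]
    exact mul_le_mul (bT i ω) (bT i ω) (abs_nonneg _) (R0 i ω)
  -- decoupled
  have d1 : ∀ i, ∫ ω, |η i ω * TB i ω| * |S ω| ∂μ ≤ 2 * ∫ ω, |η i ω * TB i ω| ∂μ := by
    intro i
    refine aux_decouple μ ((mη i).mul (hTB i)).abs bS (hTC i) (fun ω => abs_nonneg _) (bTC i) ?_ hs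
    have hm : Measurable fun p : ℝ × ℝ × ℝ => |(p.1 * p.2.1 - e i) * p.2.2| := by fun_prop
    exact (hi3 i).comp hm measurable_id
  have d2 : ∀ i, ∫ ω, (|ζ i ω| * T i ω ^ 2) * |S ω| ∂μ ≤ 2 * ∫ ω, |ζ i ω| * T i ω ^ 2 ∂μ := by
    intro i
    refine aux_decouple μ ((hζ i).abs.mul ((hT i).pow 2)) bS (hTC i)
      (fun ω => by positivity) (bTC i) ?_ hs
    have hm : Measurable fun p : ℝ × ℝ × ℝ => |p.1| * p.2.1 ^ 2 := by fun_prop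
    exact (hi3 i).comp hm measurable_id
  -- main
  have main : ∀ i, ∫ ω, ζ i ω * S ω ^ 3 ∂μ ≤ 3 * e i * σ2 + (51 / 4) * (G i + H i)
      + (25 / 4) * G i := by
    intro i
    have m1 := (hζ i).mul ((bS.sub (hT i)).pow 3)
    have m2 := (BMeas.const (Ω := Ω) (3 * e i)).mul (bS.pow 2)
    have m3 := (mη i).mul ((bS.sub (hTB i)).pow 2)
    have m4 := ((mη i).mul (hTB i)).abs
    have m5 := (hζ i).abs.mul ((hT i).pow 2)
    have z1 : ∫ ω, ζ i ω * (S ω - T i ω) ^ 3 ∂μ = 0 := by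
      have hh : IndepFun (ζ i) (fun ω => (S ω - T i ω) ^ 3) μ :=
        (hi1 i).comp measurable_id (measurable_id.pow_const 3 : Measurable fun x : ℝ => x ^ 3)
      rw [hh.integral_fun_mul_eq_mul_integral (hζ i).1.aestronglyMeasurable
        ((bS.sub (hT i)).pow 3).1.aestronglyMeasurable, hz i, zero_mul]
    have z2 : ∫ ω, η i ω * (S ω - TB i ω) ^ 2 ∂μ = 0 := by
      have hm : Measurable fun p : ℝ × ℝ => p.1 * p.2 - e i := by fun_prop
      have hh : IndepFun (η i) (fun ω => (S ω - TB i ω) ^ 2) μ :=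
        (hi2 i).comp hm (measurable_id.pow_const 2 : Measurable fun x : ℝ => x ^ 2)
      rw [hh.integral_fun_mul_eq_mul_integral (mη i).1.aestronglyMeasurable
        ((bS.sub (hTB i)).pow 2).1.aestronglyMeasurable, η0 i, zero_mul]
    have i1 := m1.int μ
    have i2 := m2.int μ
    have i3 := (BMeas.const (Ω := Ω) 3).mul m3
    have i4 := (BMeas.const (Ω := Ω) 6).mul (m4.mul bS.abs)
    have i5 := (BMeas.const (Ω := Ω) (3 / 4)).mul m4
    have i6 := (BMeas.const (Ω := Ω) 3).mul (m5.mul bS.abs)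
    have i7 := (BMeas.const (Ω := Ω) (1 / 4)).mul m5
    have step : ∫ ω, ζ i ω * S ω ^ 3 ∂μ ≤ ∫ ω, (ζ i ω * (S ω - T i ω) ^ 3
        + 3 * e i * S ω ^ 2 + 3 * (η i ω * (S ω - TB i ω) ^ 2)
        + 6 * (|η i ω * TB i ω| * |S ω|) + 3 / 4 * |η i ω * TB i ω|
        + 3 * (|ζ i ω| * T i ω ^ 2 * |S ω|) + 1 / 4 * (|ζ i ω| * T i ω ^ 2)) ∂μ := by
      refine integral_mono (((hζ i).mul (bS.pow 3)).int μ)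
        ((((((m1.add m2).add i3).add i4).add i5).add i6).add i7 |>.int μ) fun ω => ?_
      simp only
      have q1 : η i ω * TB i ω * S ω ≤ |η i ω * TB i ω| * |S ω| := by
        rw [← abs_mul]; exact le_abs_self _
      have q2 : -(η i ω * TB i ω * TB i ω) ≤ |η i ω * TB i ω| * (1 / 4) := by
        refine (neg_le_abs _).trans ?_
        rw [abs_mul]
        exact mul_le_mul_of_nonneg_left ((bTB i ω).trans (bR i ω)) (abs_nonneg _)
      have q3 : -(ζ i ω * T i ω ^ 2 * S ω) ≤ |ζ i ω| * T i ω ^ 2 * |S ω| := by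
        refine (neg_le_abs _).trans ?_
        rw [abs_mul, abs_mul, abs_of_nonneg (sq_nonneg (T i ω))]
      have q4 : ζ i ω * T i ω ^ 2 * T i ω ≤ |ζ i ω| * T i ω ^ 2 * (1 / 4) := by
        refine (le_abs_self _).trans ?_
        rw [abs_mul, abs_mul, abs_of_nonneg (sq_nonneg (T i ω))]
        exact mul_le_mul_of_nonneg_left ((bT i ω).trans (bR i ω)) (by positivity)
      have q5 : ζ i ω * S ω ^ 3 = ζ i ω * (S ω - T i ω) ^ 3 + 3 * e i * S ω ^ 2
          + 3 * (η i ω * (S ω - TB i ω) ^ 2) + 6 * (η i ω * TB i ω * S ω)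
          + 3 * -(η i ω * TB i ω * TB i ω) + 3 * -(ζ i ω * T i ω ^ 2 * S ω)
          + ζ i ω * T i ω ^ 2 * T i ω := by
        simp only [hη]
        ring
      rw [q5]
      linarith
    rw [integral_add ((((((m1.add m2).add i3).add i4).add i5).add i6).int μ) (i7.int μ),
      integral_add (((((m1.add m2).add i3).add i4).add i5).int μ) (i6.int μ),
      integral_add ((((m1.add m2).add i3).add i4).int μ) (i5.int μ),
      integral_add (((m1.add m2).add i3).int μ) (i4.int μ),
      integral_add ((m1.add m2).int μ) (i3.int μ),
      integral_add (m1.int μ) (m2.int μ), z1] at step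
    simp only [integral_const_mul] at step
    rw [z2] at step
    have := d1 i
    have := d2 i
    have := b1 i
    have := b2 i
    linarith
  -- sums
  have hGs : ∑ i, G i ≤ κ ^ 2 * ∑ i, ∫ ω, |ζ i ω| ^ 3 ∂μ := by
    simp only [hG]
    rw [← integral_finsetSum _ fun i _ => ((mζR i).mul (mR i)).int μ,
      ← integral_finsetSum _ fun i _ => ((hζ i).abs.pow 3).int μ, ← integral_const_mul]
    refine integral_mono ((BMeas.sum fun i _ => (mζR i).mul (mR i)).int μ)
      (((BMeas.const _).mul (BMeas.sum fun i _ => (hζ i).abs.pow 3)).int μ) fun ω => ?_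
    have := aux_comb D κ h1 h2 (fun i => |ζ i ω|) (fun i => |ζ i ω|) (fun i => abs_nonneg _)
      (fun i => abs_nonneg _)
    simp only at this ⊢
    refine this.trans (le_of_eq ?_)
    ring
  have hHs : ∑ i, H i ≤ κ ^ 2 * ∑ i, ∫ ω, |ζ i ω| ^ 3 ∂μ := by
    set b : ι → ℝ := fun j => ∫ ω, |ζ j ω| ∂μ with hb
    have b0 : ∀ j, 0 ≤ b j := fun j => integral_nonneg fun ω => abs_nonneg _
    have hRi : ∀ i, ∫ ω, R i ω ∂μ = ∑ k ∈ D i, b k := fun i =>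
      integral_finsetSum _ fun j _ => (hζ j).abs.int μ
    have e1 : ∑ i, H i = ∫ ω, ∑ i, |ζ i ω| * R i ω * (∑ k ∈ D i, b k) ∂μ := by
      rw [integral_finsetSum _ fun i _ => ((mζR i).mul (BMeas.const _)).int μ]
      refine Finset.sum_congr rfl fun i _ => ?_
      rw [integral_mul_const, ← hRi i]
    have e2 : ∑ i, H i ≤ ∫ ω, (κ : ℝ) ^ 2 * (2 / 3 * ∑ i, |ζ i ω| ^ 3 + 1 / 3 * ∑ i, b i ^ 3) ∂μ := by
      rw [e1]
      refine integral_mono ((BMeas.sum fun i _ => (mζR i).mul (BMeas.const _)).int μ)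
        (((BMeas.const _).mul (((BMeas.const _).mul
          (BMeas.sum fun i _ => (hζ i).abs.pow 3)).add (BMeas.const _))).int μ) fun ω => ?_
      exact aux_comb D κ h1 h2 (fun i => |ζ i ω|) b (fun i => abs_nonneg _) b0
    rw [integral_const_mul, integral_add (((BMeas.const _).mul
          (BMeas.sum fun i _ => (hζ i).abs.pow 3)).int μ) (integrable_const _),
      integral_const_mul, integral_finsetSum _ fun i _ => ((hζ i).abs.pow 3).int μ] at e2
    have e3 : ∑ i, b i ^ 3 ≤ ∑ i, ∫ ω, |ζ i ω| ^ 3 ∂μ :=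
      Finset.sum_le_sum fun i _ => aux_jensen3 μ (hζ i).abs fun ω => abs_nonneg _
    refine e2.trans (mul_le_mul_of_nonneg_left ?_ (by positivity))
    simp only [integral_const, probReal_univ, one_smul]
    linarith
  have hfin : ∫ ω, S ω ^ 4 ∂μ = ∑ i, ∫ ω, ζ i ω * S ω ^ 3 ∂μ := by
    rw [← integral_finsetSum _ fun i _ => ((hζ i).mul (bS.pow 3)).int μ]
    congr 1
    ext ω
    rw [← Finset.sum_mul, ← hS]
    ring
  have hM : 0 ≤ (κ : ℝ) ^ 2 * ∑ i, ∫ ω, |ζ i ω| ^ 3 ∂μ :=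
    mul_nonneg (by positivity)
      (Finset.sum_nonneg fun i _ => integral_nonneg fun ω => by positivity)
  calc ∫ ω, S ω ^ 4 ∂μ ≤ ∑ i, (3 * e i * σ2 + (51 / 4) * (G i + H i) + (25 / 4) * G i) := by
        rw [hfin]; exact Finset.sum_le_sum fun i _ => main i
    _ = 3 * (∑ i, e i) * σ2 + (51 / 4) * (∑ i, G i + ∑ i, H i) + (25 / 4) * ∑ i, G i := by
        simp_rw [Finset.sum_add_distrib, ← Finset.mul_sum, ← Finset.sum_mul, ← Finset.mul_sum,
          Finset.sum_add_distrib]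
    _ ≤ _ := by
        rw [hsum]
        nlinarith

lemma aux_indep {Ω β γ : Type} {m1 m2 : MeasurableSpace Ω} {mΩ : MeasurableSpace Ω}
    [mβ : MeasurableSpace β] [mγ : MeasurableSpace γ] {μ : Measure Ω}
    (h : Indep m1 m2 μ) {f : Ω → β} {g : Ω → γ} (hf : Measurable[m1] f) (hg : Measurable[m2] g) :
    IndepFun f g μ := by
  rw [IndepFun_iff_Indep]
  exact indep_of_indep_of_le_right (indep_of_indep_of_le_left h hf.comap_le) hg.comap_le

lemma aux_inter {Ω : Type} [MeasurableSpace Ω] (μ : Measure Ω) [IsProbabilityMeasure μ]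
    {X V : Ω → ℝ} (hi : IndepFun X V μ) (τ c : ℝ) :
    μ.real ({ω | τ < |X ω|} ∩ {ω | c < V ω}) = μ.real {ω | τ < |X ω|} * μ.real {ω | c < V ω} := by
  have hs : MeasurableSet {x : ℝ | τ < |x|} := measurableSet_lt measurable_const measurable_id.abs
  have ht : MeasurableSet {x : ℝ | c < x} := measurableSet_Ioi
  have h := IndepFun_iff X V μ |>.1 hi (X ⁻¹' {x : ℝ | τ < |x|}) (V ⁻¹' {x : ℝ | c < x})
    ⟨_, hs, rfl⟩ ⟨_, ht, rfl⟩
  simp only [measureReal_def]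
  rw [← ENNReal.toReal_mul]
  exact congrArg _ h

lemma aux_part1 {Ω : Type} [MeasurableSpace Ω] (μ : Measure Ω) [IsProbabilityMeasure μ]
    {X W Y V : Ω → ℝ} (hY : Measurable Y) (hV : ∀ ω, W ω = V ω + Y ω)
    (hi : IndepFun X V μ) (τ z : ℝ) (hz : 0 ≤ z) :
    μ.real {ω | z < W ω ∧ τ < |X ω|} ≤ μ.real {ω | (z + 1) / 4 < |Y ω|}
      + μ.real {ω | τ < |X ω|} * μ.real {ω | (z - 1) / 2 < W ω} := by
  have s1 : μ.real {ω | z < W ω ∧ τ < |X ω|} ≤ μ.real {ω | (z + 1) / 4 < Y ω}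
      + μ.real ({ω | τ < |X ω|} ∩ {ω | (3 * z - 1) / 4 < V ω}) := by
    refine (measureReal_mono ?_).trans (measureReal_union_le _ _)
    rintro ω ⟨h1, h2⟩
    by_cases h : (z + 1) / 4 < Y ω
    · exact Or.inl h
    · refine Or.inr ⟨h2, ?_⟩
      have := hV ω
      simp only [Set.mem_ofPred_eq]
      linarith
  have s2 : μ.real {ω | (3 * z - 1) / 4 < V ω} ≤ μ.real {ω | (z - 1) / 2 < W ω}
      + μ.real {ω | Y ω < -((z + 1) / 4)} := by
    refine (measureReal_mono ?_).trans (measureReal_union_le _ _)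
    intro ω h1
    by_cases h : Y ω < -((z + 1) / 4)
    · exact Or.inr h
    · refine Or.inl ?_
      have := hV ω
      simp only [Set.mem_ofPred_eq] at h1 ⊢
      linarith
  have s3 : μ.real {ω | (z + 1) / 4 < Y ω} + μ.real {ω | Y ω < -((z + 1) / 4)}
      = μ.real {ω | (z + 1) / 4 < |Y ω|} := by
    rw [← measureReal_union]
    · congr 1
      ext ω
      simp only [Set.mem_union, Set.mem_ofPred_eq, lt_abs]
      constructor
      · rintro (h | h)
        · exact Or.inl h
        · right; linarith
      · rintro (h | h)
        · exact Or.inl h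
        · right; linarith
    · rw [Set.disjoint_left]
      intro ω h1 h2
      simp only [Set.mem_ofPred_eq] at h1 h2
      linarith
    · exact measurableSet_lt hY measurable_const
  rw [aux_inter μ hi] at s1
  have p1 : μ.real {ω | τ < |X ω|} ≤ 1 := measureReal_le_one
  have p0 : 0 ≤ μ.real {ω | τ < |X ω|} := measureReal_nonneg
  have q0 : 0 ≤ μ.real {ω | Y ω < -((z + 1) / 4)} := measureReal_nonneg
  have := mul_le_mul_of_nonneg_left s2 p0
  nlinarith

lemma aux_part2 {Ω : Type} [MeasurableSpace Ω] (μ : Measure Ω) [IsProbabilityMeasure μ]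
    {X W V : Ω → ℝ} (hV : ∀ ω, |W ω - V ω| ≤ 1 / 8)
    (hi : IndepFun X V μ) (τ z : ℝ) :
    μ.real {ω | z < W ω ∧ τ < |X ω|} ≤
      μ.real {ω | τ < |X ω|} * μ.real {ω | z - 1 / 4 < W ω} := by
  have s1 : μ.real {ω | z < W ω ∧ τ < |X ω|} ≤
      μ.real ({ω | τ < |X ω|} ∩ {ω | z - 1 / 8 < V ω}) := by
    refine measureReal_mono ?_
    rintro ω ⟨h1, h2⟩
    refine ⟨h2, ?_⟩
    have := abs_le.1 (hV ω)
    simp only [Set.mem_ofPred_eq]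
    linarith
  have s2 : μ.real {ω | z - 1 / 8 < V ω} ≤ μ.real {ω | z - 1 / 4 < W ω} := by
    refine measureReal_mono ?_
    intro ω h1
    have := abs_le.1 (hV ω)
    simp only [Set.mem_ofPred_eq] at h1 ⊢
    linarith
  rw [aux_inter μ hi] at s1
  exact s1.trans (mul_le_mul_of_nonneg_left s2 measureReal_nonneg)

lemma aux_cov {Ω : Type} [MeasurableSpace Ω] (μ : Measure Ω) [IsProbabilityMeasure μ]
    {X Y : Ω → ℝ} (hX : MemLp X 2 μ) (hY : MemLp Y 2 μ) :
    cov[X, Y; μ] ≤ (Var[X; μ] + Var[Y; μ]) / 2 := by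
  have := variance_sub hX hY
  have := variance_nonneg (X - Y) μ
  linarith

lemma aux_var {Ω : Type} [MeasurableSpace Ω] (μ : Measure Ω) [IsProbabilityMeasure μ]
    {ι : Type} [Fintype ι] [DecidableEq ι] (ξ : ι → Ω → ℝ) (A : ι → Finset ι) (κ : ℕ)
    (h1 : ∀ i, (A i).card ≤ κ)
    (h2 : ∀ j, (Finset.univ.filter fun i => j ∈ A i).card ≤ κ)
    (hξ : ∀ i, MemLp (ξ i) 2 μ) (hi : ∀ i, ∀ j, j ∉ A i → IndepFun (ξ i) (ξ j) μ) :
    Var[fun ω => ∑ i, ξ i ω; μ] ≤ κ * ∑ i, ∫ ω, ξ i ω ^ 2 ∂μ := by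
  rw [variance_fun_sum hξ]
  have v0 : ∀ i, 0 ≤ Var[ξ i; μ] := fun i => variance_nonneg _ _
  have key : ∀ i, ∑ j, cov[ξ i, ξ j; μ] ≤ (κ * Var[ξ i; μ] + ∑ j ∈ A i, Var[ξ j; μ]) / 2 := by
    intro i
    have : ∑ j, cov[ξ i, ξ j; μ] = ∑ j ∈ A i, cov[ξ i, ξ j; μ] := by
      symm
      refine Finset.sum_subset (Finset.subset_univ _) fun j _ hj => ?_
      exact (hi i j hj).covariance_eq_zero (hξ i) (hξ j)
    rw [this]
    calc _ ≤ ∑ j ∈ A i, (Var[ξ i; μ] + Var[ξ j; μ]) / 2 :=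
          Finset.sum_le_sum fun j _ => aux_cov μ (hξ i) (hξ j)
      _ = (((A i).card : ℝ) * Var[ξ i; μ] + ∑ j ∈ A i, Var[ξ j; μ]) / 2 := by
          rw [← Finset.sum_div, Finset.sum_add_distrib, Finset.sum_const, nsmul_eq_mul]
      _ ≤ _ := by
          have : ((A i).card : ℝ) ≤ κ := by exact_mod_cast h1 i
          have := v0 i
          gcongr
  have c := aux_count A κ h2 (fun j => Var[ξ j; μ]) v0
  calc _ ≤ ∑ i, (κ * Var[ξ i; μ] + ∑ j ∈ A i, Var[ξ j; μ]) / 2 :=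
        Finset.sum_le_sum fun i _ => key i
    _ = (κ * ∑ i, Var[ξ i; μ] + ∑ i, ∑ j ∈ A i, Var[ξ j; μ]) / 2 := by
        rw [← Finset.sum_div, Finset.sum_add_distrib, ← Finset.mul_sum]
    _ ≤ κ * ∑ i, Var[ξ i; μ] := by linarith
    _ ≤ _ := by
        gcongr with i
        have := variance_le_expectation_sq (hξ i).1
        simpa using this

lemma aux_cheb {Ω : Type} [MeasurableSpace Ω] (μ : Measure Ω) [IsProbabilityMeasure μ]
    {W Wb : Ω → ℝ} (hD : MemLp (fun ω => W ω - Wb ω) 2 μ)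
    (hv : Var[fun ω => W ω - Wb ω; μ] ≤ 1 / 128) (hm : |∫ ω, (W ω - Wb ω) ∂μ| ≤ 1 / 16)
    (z : ℝ) (hz : 0 ≤ z) (hz2 : z ≤ 29) :
    μ.real {ω | z - 1 / 4 < Wb ω} ≤ ((1 + z) ^ 3)⁻¹ + μ.real {ω | (z - 1) / 2 < W ω} := by
  set m := ∫ ω, (W ω - Wb ω) ∂μ with hm'
  have hc : (0 : ℝ) < (1 + z) / 2 - 5 / 16 := by linarith
  have ch := meas_ge_le_variance_div_sq hD hc
  have ch' : μ.real {ω | (1 + z) / 2 - 5 / 16 ≤ |W ω - Wb ω - m|} ≤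
      Var[fun ω => W ω - Wb ω; μ] / ((1 + z) / 2 - 5 / 16) ^ 2 := by
    rw [measureReal_def]
    exact ENNReal.toReal_le_of_le_ofReal (div_nonneg (variance_nonneg _ _) (sq_nonneg _)) ch
  have s : μ.real {ω | z - 1 / 4 < Wb ω} ≤
      μ.real {ω | (1 + z) / 2 - 5 / 16 ≤ |W ω - Wb ω - m|} + μ.real {ω | (z - 1) / 2 < W ω} := by
    refine (measureReal_mono ?_).trans (measureReal_union_le _ _)
    intro ω h
    by_cases h' : (z - 1) / 2 < W ω
    · exact Or.inr h'
    · left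
      simp only [Set.mem_ofPred_eq] at h ⊢
      have := (abs_le.1 hm).1
      have := neg_le_abs (W ω - Wb ω - m)
      linarith
  have b : Var[fun ω => W ω - Wb ω; μ] / ((1 + z) / 2 - 5 / 16) ^ 2 ≤ ((1 + z) ^ 3)⁻¹ := by
    have h3 : 0 < (1 + z) ^ 3 := by positivity
    rw [inv_eq_one_div, div_le_div_iff₀ (by positivity) h3]
    have : (1 + z) ^ 3 ≤ 128 * ((1 + z) / 2 - 5 / 16) ^ 2 := by
      have hu : (1 + z) ^ 3 ≤ 30 * (1 + z) ^ 2 - 0 := by nlinarith [sq_nonneg (1 + z)]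
      nlinarith [mul_nonneg hz (sub_nonneg.2 hz2), mul_nonneg (mul_nonneg hz hz) (sub_nonneg.2 hz2)]
    nlinarith
  linarith

lemma aux_tail4 {Ω : Type} [MeasurableSpace Ω] (μ : Measure Ω) [IsProbabilityMeasure μ]
    {Wb : Ω → ℝ} (hW : BMeas Wb) (hm : |∫ ω, Wb ω ∂μ| ≤ 1 / 16) (K : ℝ) (hK : 0 ≤ K)
    (h4 : ∫ ω, (Wb ω - ∫ ω, Wb ω ∂μ) ^ 4 ∂μ ≤ 16 + K)
    (z : ℝ) (hz2 : 29 ≤ z) :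
    μ.real {ω | z - 1 / 4 < Wb ω} ≤ ((1 + z) ^ 3)⁻¹ + K * ((1 + z) ^ 3)⁻¹ := by
  set m := ∫ ω, Wb ω ∂μ with hm'
  have c := mul_meas_ge_le_integral_of_nonneg (μ := μ)
    (f := fun ω => (Wb ω - m) ^ 4) (Filter.Eventually.of_forall fun ω => by positivity)
    (((hW.sub (BMeas.const _)).pow 4).int μ) ((z - 5 / 16) ^ 4)
  have s : μ.real {ω | z - 1 / 4 < Wb ω} ≤ μ.real {ω | (z - 5 / 16) ^ 4 ≤ (Wb ω - m) ^ 4} := by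
    refine measureReal_mono ?_
    intro ω h
    simp only [Set.mem_ofPred_eq] at h ⊢
    have := (abs_le.1 hm).2
    exact pow_le_pow_left₀ (by linarith) (by linarith) 4
  set P := μ.real {ω | z - 1 / 4 < Wb ω} with hP
  have P0 : 0 ≤ P := measureReal_nonneg
  have hp : 0 ≤ (z - 5 / 16) ^ 4 := by positivity
  have c2 : (z - 5 / 16) ^ 4 * P ≤ 16 + K := (mul_le_mul_of_nonneg_left s hp).trans (c.trans h4)
  have c3 : 16 * (1 + z) ^ 3 ≤ (z - 5 / 16) ^ 4 := by
    have h1 : (1 + z) ≤ (30 / 28.5) * (z - 5 / 16) := by linarith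
    have h2 : (1 + z) ^ 3 ≤ ((30 / 28.5) * (z - 5 / 16)) ^ 3 := pow_le_pow_left₀ (by linarith) h1 3
    have h3 : 0 ≤ (z - 5 / 16) ^ 3 := pow_nonneg (by linarith) 3
    have h4 : (z - 5 / 16) ^ 4 = (z - 5 / 16) ^ 3 * (z - 5 / 16) := by ring
    have h5 : (z - 5 / 16) ^ 3 * 28 ≤ (z - 5 / 16) ^ 3 * (z - 5 / 16) :=
      mul_le_mul_of_nonneg_left (by linarith) h3
    rw [mul_pow] at h2
    nlinarith
  have h3 : 0 < (1 + z) ^ 3 := by positivity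
  have : P * (1 + z) ^ 3 ≤ 1 + K := by nlinarith [mul_le_mul_of_nonneg_right c3 P0]
  rw [← one_add_mul, ← div_eq_mul_inv, le_div_iff₀ h3]
  exact this

lemma aux_ms {Ω ι : Type} [DecidableEq ι] (X : ι → Ω → ℝ) (s : Finset ι) (j : ι) (hj : j ∈ s) :
    Measurable[MeasurableSpace.comap (fun ω => fun j : s => X j.1 ω) MeasurableSpace.pi] (X j) :=
  (measurable_pi_apply (⟨j, hj⟩ : s)).comp
    (comap_measurable (m := MeasurableSpace.pi) (fun ω => fun j : s => X j.1 ω))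

lemma aux_ms2 {Ω ι : Type} [DecidableEq ι] (X : ι → Ω → ℝ) (A : ι → Finset ι) (s : Finset ι)
    (l j : ι) (hl : l ∈ s) (hj : j ∈ A l) :
    Measurable[MeasurableSpace.comap (fun ω => fun l : s => fun j : A l.1 => X j.1 ω)
      MeasurableSpace.pi] (X j) :=
  ((measurable_pi_apply (⟨j, hj⟩ : A l)).comp
    (measurable_pi_apply (X := fun l : s => (A l.1 → ℝ)) (⟨l, hl⟩ : s))).comp
    (comap_measurable (m := MeasurableSpace.pi) (fun ω => fun l : s => fun j : A l.1 => X j.1 ω))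

lemma aux_msum {Ω ι : Type} {m : MeasurableSpace Ω} {f : ι → Ω → ℝ} {s : Finset ι}
    (h : ∀ j ∈ s, Measurable (f j)) : Measurable (fun ω => ∑ j ∈ s, f j ω) :=
  Finset.measurable_fun_sum s h

lemma aux_comp {Ω : Type} {m : MeasurableSpace Ω} {f : Ω → ℝ} {g : ℝ → ℝ} (hg : Measurable g)
    (h : Measurable f) : Measurable (fun ω => g (f ω)) := hg.comp h

lemma aux_triple {Ω : Type} {m : MeasurableSpace Ω} {f g h : Ω → ℝ} (hf : Measurable f)
    (hg : Measurable g) (hh : Measurable h) : Measurable (fun ω => (f ω, g ω, h ω)) :=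
  hf.prodMk (hg.prodMk hh)

lemma aux_pair {Ω : Type} {m : MeasurableSpace Ω} {f g : Ω → ℝ} (hf : Measurable f)
    (hg : Measurable g) : Measurable (fun ω => (f ω, g ω)) :=
  hf.prodMk hg

lemma aux_abs_diff {Ω : Type} [MeasurableSpace Ω] (μ : Measure Ω) [IsProbabilityMeasure μ]
    (W V : Ω → ℝ) (z r : ℝ) (h1 : μ.real {ω | z < W ω ∧ V ω ≤ z} ≤ r)
    (h2 : μ.real {ω | z < V ω ∧ W ω ≤ z} ≤ r) :
    |μ.real {ω | z < W ω} - μ.real {ω | z < V ω}| ≤ r := by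
  have a : ∀ W V : Ω → ℝ, μ.real {ω | z < W ω} ≤
      μ.real {ω | z < V ω} + μ.real {ω | z < W ω ∧ V ω ≤ z} := by
    intro W V
    refine (measureReal_mono ?_).trans (measureReal_union_le _ _)
    intro ω h
    by_cases h' : z < V ω
    · exact Or.inl h'
    · exact Or.inr ⟨h, not_lt.1 h'⟩
  have := a W V
  have := a V W
  rw [abs_le]
  constructor <;> linarith

lemma aux_union {Ω : Type} [MeasurableSpace Ω] (μ : Measure Ω) [IsProbabilityMeasure μ]
    {ι : Type} [Fintype ι] (E : Set Ω) (F : ι → Set Ω) (h : ∀ ω ∈ E, ∃ i, ω ∈ F i) :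
    μ.real E ≤ ∑ i, μ.real (F i) := by
  refine (measureReal_mono (s₂ := ⋃ i, F i) ?_).trans (measureReal_iUnion_fintype_le F)
  intro ω hω
  exact Set.mem_iUnion.2 (h ω hω)

set_option maxHeartbeats 1600000 in
theorem stmt_17 :
    ∃ C : ℝ, 0 < C ∧
    ∀ (Ω : Type) [MeasurableSpace Ω] (μ : Measure Ω) [IsProbabilityMeasure μ]
      (ι : Type) [Fintype ι] [DecidableEq ι]
      (X : ι → Ω → ℝ) (A B Bstar Cstar Dstar : ι → Finset ι),
      (∀ i, Measurable (X i)) →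
      (∀ i, ∫ ω, X i ω ∂μ = 0) →
      (∀ i, Integrable (fun ω => (X i ω) ^ 2) μ) →
      (∀ i, i ∈ A i) → (∀ i, A i ⊆ B i) → (∀ i, B i ⊆ Bstar i) →
      (∀ i, Bstar i ⊆ Cstar i) → (∀ i, Cstar i ⊆ Dstar i) →
      (∀ i, IndepFun (X i) (fun ω => fun j : ((A i)ᶜ : Finset ι) => X j.1 ω) μ) →
      (∀ i, IndepFun (fun ω => fun j : (A i : Finset ι) => X j.1 ω)
        (fun ω => fun j : ((B i)ᶜ : Finset ι) => X j.1 ω) μ) →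
      (∀ i, IndepFun (fun ω => fun j : (A i : Finset ι) => X j.1 ω)
        (fun ω => fun l : ((Bstar i)ᶜ : Finset ι) =>
          fun j : (A l.1 : Finset ι) => X j.1 ω) μ) →
      (∀ i, IndepFun (fun ω => fun l : (Bstar i : Finset ι) =>
          fun j : (A l.1 : Finset ι) => X j.1 ω)
        (fun ω => fun l : ((Cstar i)ᶜ : Finset ι) =>
          fun j : (A l.1 : Finset ι) => X j.1 ω) μ) →
      (∀ i, IndepFun (fun ω => fun l : (Cstar i : Finset ι) =>
          fun j : (A l.1 : Finset ι) => X j.1 ω)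
        (fun ω => fun l : ((Dstar i)ᶜ : Finset ι) =>
          fun j : (A l.1 : Finset ι) => X j.1 ω) μ) →
    ∀ (W : Ω → ℝ), (∀ ω, W ω = ∑ i, X i ω) →
      (∫ ω, (W ω) ^ 2 ∂μ) = 1 →
    ∀ (κ : ℕ), (κ = Finset.univ.sup fun i => max (Dstar i).card
        (Finset.univ.filter fun j => i ∈ Dstar j).card) →
    ∀ (τ : ℝ), τ = 1 / (8 * (κ : ℝ)) →
    ∀ (Wbar : Ω → ℝ),
      (∀ ω, Wbar ω = ∑ i, (if |X i ω| ≤ τ then X i ω else 0)) →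
    ∀ (Y : ι → Ω → ℝ), (∀ i ω, Y i ω = ∑ j ∈ A i, X j ω) →
    ∀ (β₂ β₃ : ℝ),
      (β₂ = ∑ i, ∫ ω, (if τ < |X i ω| then (X i ω) ^ 2 else 0) ∂μ) →
      (β₃ = ∑ i, ∫ ω, (if |X i ω| ≤ τ then |X i ω| ^ 3 else 0) ∂μ) →
      β₂ ≤ τ / 16 →
    ∀ z : ℝ, 0 ≤ z →
      |(μ {ω | z < W ω}).toReal - (μ {ω | z < Wbar ω}).toReal| ≤
        (∑ i, (μ {ω | (z + 1) / 4 < |Y i ω|}).toReal) +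
          C * ((z + 1) ^ 3)⁻¹ * (κ : ℝ) ^ 3 * β₃ +
          64 * (κ : ℝ) ^ 2 * β₂ *
            (((1 + z) ^ 3)⁻¹ + (μ {ω | (z - 1) / 2 < W ω}).toReal) := by
  refine ⟨128, by norm_num, ?_⟩
  intro Ω _ μ _ ι _ _ X A B Bs Cs Ds mX X0 X2 hA hAB hBBs hBC hCD i1 i2 _ i4 _ W hW W2 κ hκ τ hτ
    Wb hWb Y hY β₂ β₃ hβ₂ hβ₃ hβ z hz
  simp only [← measureReal_def]
  have hAD : ∀ i, A i ⊆ Ds i := fun i =>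
    (hAB i).trans ((hBBs i).trans ((hBC i).trans (hCD i)))
  have hBD : ∀ i, B i ⊆ Ds i := fun i => (hBBs i).trans ((hBC i).trans (hCD i))
  -- counting facts
  have hsup : ∀ i, max (Ds i).card (Finset.univ.filter fun j => i ∈ Ds j).card ≤ κ := by
    intro i
    rw [hκ]
    exact Finset.le_sup (f := fun i => max (Ds i).card
      (Finset.univ.filter fun j => i ∈ Ds j).card) (Finset.mem_univ i)
  have k1 : ∀ i, (Ds i).card ≤ κ := fun i => (le_max_left _ _).trans (hsup i)
  have k2 : ∀ j, (Finset.univ.filter fun i => j ∈ Ds i).card ≤ κ :=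
    fun i => (le_max_right _ _).trans (hsup i)
  have k1A : ∀ i, (A i).card ≤ κ := fun i => (Finset.card_le_card (hAD i)).trans (k1 i)
  have k2A : ∀ j, (Finset.univ.filter fun i => j ∈ A i).card ≤ κ := fun j =>
    (Finset.card_le_card (Finset.monotone_filter_right _ fun i _ h => hAD i h)).trans (k2 j)
  have hne : Nonempty ι := by
    by_contra h
    rw [not_nonempty_iff] at h
    simp [hW] at W2
  have κ0 : (0 : ℝ) < κ := by
    obtain ⟨i⟩ := hne
    have : 0 < (A i).card := Finset.card_pos.2 ⟨i, hA i⟩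
    exact_mod_cast this.trans_le (k1A i)
  have τ0 : 0 < τ := by rw [hτ]; positivity
  have κτ : κ * τ = 1 / 8 := by rw [hτ]; field_simp
  -- truncation
  set tr : ℝ → ℝ := fun x => if |x| ≤ τ then x else 0 with htr
  have mtr : Measurable tr :=
    Measurable.ite (measurableSet_le measurable_id.abs measurable_const) measurable_id
      measurable_const
  have btr : ∀ x, |tr x| ≤ τ := by
    intro x
    simp only [htr]
    split_ifs with h
    · exact h
    · simpa using τ0.le
  have hWb' : ∀ ω, Wb ω = ∑ i, tr (X i ω) := hWb
  have bmX : ∀ i, BMeas (fun ω => tr (X i ω)) := fun i => ⟨mtr.comp (mX i), τ, fun ω => btr _⟩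
  have bWb : BMeas Wb := by
    have := BMeas.sum (s := Finset.univ) fun i (_ : i ∈ Finset.univ) => bmX i
    simpa only [← hWb'] using this
  have LX : ∀ i, MemLp (X i) 2 μ := fun i =>
    (memLp_two_iff_integrable_sq (mX i).aestronglyMeasurable).2 (X2 i)
  have IX : ∀ i, Integrable (X i) μ := fun i => (LX i).integrable (by norm_num)
  -- excess
  set ex : ℝ → ℝ := fun x => x - tr x with hex
  have mex : Measurable ex := measurable_id.sub mtr
  have ex2 : ∀ x, ex x ^ 2 = if τ < |x| then x ^ 2 else 0 := by
    intro x
    simp only [hex, htr]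
    by_cases h : |x| ≤ τ
    · simp [h, not_lt.2 h]
    · simp [h, not_le.1 h]
  have Lex : ∀ i, MemLp (fun ω => ex (X i ω)) 2 μ := by
    intro i
    refine (LX i).of_le (mex.comp (mX i)).aestronglyMeasurable (Filter.Eventually.of_forall ?_)
    intro ω
    simp only [hex, htr, Real.norm_eq_abs]
    split_ifs <;> simp
  set b2 : ι → ℝ := fun i => ∫ ω, ex (X i ω) ^ 2 ∂μ with hb2
  have b20 : ∀ i, 0 ≤ b2 i := fun i => integral_nonneg fun ω => sq_nonneg _
  have hβ₂' : β₂ = ∑ i, b2 i := by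
    rw [hβ₂]; simp only [hb2, ex2]
  have hβ₂0 : 0 ≤ β₂ := by rw [hβ₂']; exact Finset.sum_nonneg fun i _ => b20 i
  have hβ₃' : β₃ = ∑ i, ∫ ω, |tr (X i ω)| ^ 3 ∂μ := by
    rw [hβ₃]
    refine Finset.sum_congr rfl fun i _ => ?_
    congr 1
    ext ω
    simp only [htr]
    split_ifs <;> simp
  have hβ₃0 : 0 ≤ β₃ := by
    rw [hβ₃']; exact Finset.sum_nonneg fun i _ => integral_nonneg fun ω => by positivity
  -- probabilities of large values
  set p : ι → ℝ := fun i => μ.real {ω | τ < |X i ω|} with hp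
  have hpb : ∀ i, p i ≤ 64 * κ ^ 2 * b2 i := by
    intro i
    have c := mul_meas_ge_le_integral_of_nonneg (μ := μ) (f := fun ω => ex (X i ω) ^ 2)
      (Filter.Eventually.of_forall fun ω => sq_nonneg _) (Lex i).integrable_sq (τ ^ 2)
    have s : p i ≤ μ.real {ω | τ ^ 2 ≤ ex (X i ω) ^ 2} := by
      refine measureReal_mono ?_
      intro ω h
      simp only [Set.mem_ofPred_eq] at h ⊢
      rw [ex2, if_pos h, ← sq_abs (X i ω)]
      exact pow_le_pow_left₀ τ0.le h.le 2
    have c2 : τ ^ 2 * p i ≤ b2 i := (mul_le_mul_of_nonneg_left s (by positivity)).trans c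
    have e : 64 * (κ : ℝ) ^ 2 * τ ^ 2 = 1 := by
      have : (κ * τ) ^ 2 = 1 / 64 := by rw [κτ]; norm_num
      nlinarith
    calc p i = 64 * (κ : ℝ) ^ 2 * τ ^ 2 * p i := by rw [e, one_mul]
      _ = 64 * (κ : ℝ) ^ 2 * (τ ^ 2 * p i) := by ring
      _ ≤ _ := mul_le_mul_of_nonneg_left c2 (by positivity)
  have hps : ∑ i, p i ≤ 64 * κ ^ 2 * β₂ := by
    rw [hβ₂', Finset.mul_sum]
    exact Finset.sum_le_sum fun i _ => hpb i
  have hbig : ∀ ω, W ω ≠ Wb ω → ∃ i, τ < |X i ω| := by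
    intro ω h
    by_contra! h'
    apply h
    rw [hW, hWb']
    refine Finset.sum_congr rfl fun i _ => ?_
    simp [htr, h' i]
  -- sums over complements
  have hcompl : ∀ (s : Finset ι) (f : ι → ℝ), ∑ j, f j - ∑ j ∈ s, f j = ∑ j ∈ sᶜ, f j := by
    intro s f
    rw [← Finset.sum_add_sum_compl s f]; ring
  have hind1 : ∀ i, ∀ (g : ℝ → ℝ) (h : ι → ℝ → ℝ), Measurable g → (∀ j, Measurable (h j)) →
      IndepFun (fun ω => g (X i ω)) (fun ω => ∑ j ∈ (A i)ᶜ, h j (X j ω)) μ := by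
    intro i g h hg hh
    have := (IndepFun_iff_Indep _ _ _).1 (i1 i)
    refine aux_indep this (aux_comp hg (comap_measurable _)) ?_
    exact aux_msum fun j hj => aux_comp (hh j) (aux_ms X _ j hj)
  have V0 : 0 ≤ ((1 + z) ^ 3)⁻¹ := by positivity
  have PW0 : 0 ≤ μ.real {ω | (z - 1) / 2 < W ω} := measureReal_nonneg
  have PY0 : 0 ≤ ∑ i, μ.real {ω | (z + 1) / 4 < |Y i ω|} :=
    Finset.sum_nonneg fun i _ => measureReal_nonneg
  have hc0 : 0 ≤ 128 * ((z + 1) ^ 3)⁻¹ * (κ : ℝ) ^ 3 * β₃ := by positivity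
  apply aux_abs_diff
  · -- first part
    have u := aux_union μ {ω | z < W ω ∧ Wb ω ≤ z} (fun i => {ω | z < W ω ∧ τ < |X i ω|}) (by
      rintro ω ⟨h1, h2⟩
      obtain ⟨i, hi⟩ := hbig ω (by linarith)
      exact ⟨i, h1, hi⟩)
    have v : ∀ i, μ.real {ω | z < W ω ∧ τ < |X i ω|} ≤ μ.real {ω | (z + 1) / 4 < |Y i ω|}
        + p i * μ.real {ω | (z - 1) / 2 < W ω} := by
      intro i
      refine aux_part1 μ (V := fun ω => ∑ j ∈ (A i)ᶜ, X j ω) ?_ ?_ ?_ τ z hz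
      · have : Y i = fun ω => ∑ j ∈ A i, X j ω := funext fun ω => hY i ω
        rw [this]
        exact aux_msum fun j _ => mX j
      · intro ω
        rw [hW, hY, ← hcompl]; ring
      · exact hind1 i id (fun _ => id) measurable_id fun _ => measurable_id
    have w := u.trans (Finset.sum_le_sum fun i _ => v i)
    rw [Finset.sum_add_distrib, ← Finset.sum_mul] at w
    have := mul_le_mul_of_nonneg_right hps PW0
    have : 0 ≤ 64 * (κ : ℝ) ^ 2 * β₂ * ((1 + z) ^ 3)⁻¹ := by positivity
    linarith
  · -- second part
    have u := aux_union μ {ω | z < Wb ω ∧ W ω ≤ z} (fun i => {ω | z < Wb ω ∧ τ < |X i ω|}) (by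
      rintro ω ⟨h1, h2⟩
      obtain ⟨i, hi⟩ := hbig ω (by linarith)
      exact ⟨i, h1, hi⟩)
    have v : ∀ i, μ.real {ω | z < Wb ω ∧ τ < |X i ω|} ≤
        p i * μ.real {ω | z - 1 / 4 < Wb ω} := by
      intro i
      refine aux_part2 μ (V := fun ω => ∑ j ∈ (A i)ᶜ, tr (X j ω)) ?_ ?_ τ z
      · intro ω
        have : Wb ω - ∑ j ∈ (A i)ᶜ, tr (X j ω) = ∑ j ∈ A i, tr (X j ω) := by
          rw [hWb', ← hcompl]; ring
        rw [this]
        calc _ ≤ ∑ j ∈ A i, |tr (X j ω)| := Finset.abs_sum_le_sum_abs _ _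
          _ ≤ ∑ j ∈ A i, τ := Finset.sum_le_sum fun j _ => btr _
          _ = (A i).card * τ := by simp
          _ ≤ κ * τ := by
            have : ((A i).card : ℝ) ≤ κ := by exact_mod_cast k1A i
            gcongr
          _ = 1 / 8 := κτ
      · exact hind1 i id (fun _ => tr) measurable_id fun _ => mtr
    have w := u.trans (Finset.sum_le_sum fun i _ => v i)
    rw [← Finset.sum_mul] at w
    have Pb0 : 0 ≤ μ.real {ω | z - 1 / 4 < Wb ω} := measureReal_nonneg
    have w2 := w.trans (mul_le_mul_of_nonneg_right hps Pb0)
    -- W - Wb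
    have hD : (fun ω => W ω - Wb ω) = fun ω => ∑ i, ex (X i ω) := by
      ext ω
      simp only [hex]
      rw [hW, hWb', Finset.sum_sub_distrib]
    have LD : MemLp (fun ω => W ω - Wb ω) 2 μ := by
      rw [hD]
      exact memLp_finsetSum _ fun i _ => Lex i
    have vD : Var[fun ω => W ω - Wb ω; μ] ≤ 1 / 128 := by
      rw [hD]
      have := aux_var μ (fun i ω => ex (X i ω)) A κ k1A k2A Lex (by
        intro i j hj
        have := (IndepFun_iff_Indep _ _ _).1 (i1 i)
        exact aux_indep this (aux_comp mex (comap_measurable _))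
          (aux_comp mex (aux_ms X _ j (by simpa using hj))))
      refine this.trans ?_
      rw [← hβ₂']
      nlinarith
    have LW : MemLp W 2 μ := by
      have : W = fun ω => ∑ i, X i ω := funext hW
      rw [this]
      exact memLp_finsetSum _ fun i _ => LX i
    have EW : ∫ ω, W ω ∂μ = 0 := by
      simp only [hW]
      rw [integral_finsetSum _ fun i _ => IX i]
      simp [X0]
    have ED : |∫ ω, (W ω - Wb ω) ∂μ| ≤ 1 / 16 := by
      have e1 : ∫ ω, (W ω - Wb ω) ∂μ = ∑ i, ∫ ω, ex (X i ω) ∂μ := by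
        rw [hD, integral_finsetSum _ fun i _ => (Lex i).integrable (by norm_num)]
      rw [e1]
      have e2 : ∀ i, |∫ ω, ex (X i ω) ∂μ| ≤ b2 i / τ := by
        intro i
        refine abs_integral_le_integral_abs.trans ?_
        simp only [hb2]
        rw [← integral_div]
        refine integral_mono ((Lex i).integrable (by norm_num)).abs
          ((Lex i).integrable_sq.div_const _) fun ω => ?_
        simp only
        rw [le_div_iff₀ τ0]
        by_cases h : |X i ω| ≤ τ
        · simp [hex, htr, h]
        · have e3 : ex (X i ω) = X i ω := by simp [hex, htr, h]
          rw [e3, ← sq_abs, sq]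
          exact mul_le_mul_of_nonneg_left (not_le.1 h).le (abs_nonneg _)
      calc _ ≤ ∑ i, |∫ ω, ex (X i ω) ∂μ| := Finset.abs_sum_le_sum_abs _ _
        _ ≤ ∑ i, b2 i / τ := Finset.sum_le_sum fun i _ => e2 i
        _ = β₂ / τ := by rw [hβ₂', Finset.sum_div]
        _ ≤ 1 / 16 := by
          rw [div_le_iff₀ τ0]; linarith
    rcases le_total z 29 with hz29 | hz29
    · have c := aux_cheb μ LD vD ED z hz hz29
      have := mul_le_mul_of_nonneg_left c (by positivity : 0 ≤ 64 * (κ : ℝ) ^ 2 * β₂)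
      linarith
    · -- fourth moment
      have IWb := bWb.int μ
      set c : ι → ℝ := fun i => ∫ ω, tr (X i ω) ∂μ with hc
      have EWb : ∫ ω, Wb ω ∂μ = ∑ i, c i := by
        simp only [hWb']
        rw [integral_finsetSum _ fun i _ => (bmX i).int μ]
      have EWb' : |∫ ω, Wb ω ∂μ| ≤ 1 / 16 := by
        rw [integral_sub (LW.integrable (by norm_num)) IWb, EW, zero_sub, abs_neg] at ED
        exact ED
      set ζ : ι → Ω → ℝ := fun i ω => tr (X i ω) - c i with hζ
      have mζ : ∀ i, BMeas (ζ i) := fun i => (bmX i).sub (BMeas.const _)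
      have hcb : ∀ i, |c i| ≤ τ := by
        intro i
        refine abs_integral_le_integral_abs.trans ?_
        have : ∫ ω, |tr (X i ω)| ∂μ ≤ ∫ ω, τ ∂μ :=
          integral_mono ((bmX i).abs.int μ) (integrable_const _) fun ω => btr _
        simpa using this
      have bζ : ∀ i ω, |ζ i ω| ≤ 2 * τ := by
        intro i ω
        have := abs_sub (tr (X i ω)) (c i)
        have := btr (X i ω)
        have := hcb i
        simp only [hζ]
        linarith
      set S : Ω → ℝ := fun ω => Wb ω - ∫ ω, Wb ω ∂μ with hS
      have hSζ : ∀ ω, S ω = ∑ i, ζ i ω := by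
        intro ω
        simp only [hS, hζ]
        rw [EWb, hWb', Finset.sum_sub_distrib]
      have varS : ∫ ω, S ω ^ 2 ∂μ ≤ 9 / 4 := by
        have LWb : MemLp Wb 2 μ :=
          (memLp_two_iff_integrable_sq bWb.1.aestronglyMeasurable).2 ((bWb.pow 2).int μ)
        have e1 : ∫ ω, S ω ^ 2 ∂μ = Var[Wb; μ] := (variance_eq_integral bWb.1.aemeasurable).symm
        have e2 : Wb = W - fun ω => W ω - Wb ω := by ext ω; simp
        have e3 := variance_sub LW LD
        rw [← e2] at e3
        have e4 := variance_add LW LD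
        have e5 := variance_nonneg (W + fun ω => W ω - Wb ω) μ
        have e6 : Var[W; μ] = 1 := by
          rw [variance_of_integral_eq_zero LW.1.aemeasurable EW, W2]
        linarith
      have hSc : ∀ (s : Finset ι), (fun ω => S ω - ∑ j ∈ s, ζ j ω) = fun ω => ∑ j ∈ sᶜ, ζ j ω := by
        intro s
        ext ω
        rw [hSζ, hcompl]
      have mζm : ∀ {m : MeasurableSpace Ω} (i : ι), Measurable[m] (X i) → Measurable[m] (ζ i) :=
        fun i h => aux_comp (mtr.sub_const (c i)) h
      have bsum : ∀ i ω (s : Finset ι), s ⊆ Ds i → ∑ j ∈ s, |ζ j ω| ≤ 1 / 4 := by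
        intro i ω s hs
        calc _ ≤ ∑ j ∈ s, 2 * τ := Finset.sum_le_sum fun j _ => bζ _ _
          _ = s.card * (2 * τ) := by simp
          _ ≤ κ * (2 * τ) := by
            have : (s.card : ℝ) ≤ κ := by exact_mod_cast (Finset.card_le_card hs).trans (k1 i)
            gcongr
          _ = 1 / 4 := by linarith
      have babs : ∀ i ω (s : Finset ι), s ⊆ Ds i → |∑ j ∈ s, ζ j ω| ≤ ∑ j ∈ Ds i, |ζ j ω| :=
        fun i ω s hs => (Finset.abs_sum_le_sum_abs _ _).trans
          (Finset.sum_le_sum_of_subset_of_nonneg hs fun _ _ _ => abs_nonneg _)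
      have F := aux_fourth μ ζ (fun i ω => ∑ j ∈ A i, ζ j ω) (fun i ω => ∑ j ∈ B i, ζ j ω)
        (fun i ω => ∑ j ∈ Cs i, ζ j ω) S Ds κ k1 k2 mζ
        (fun i => BMeas.sum fun j _ => mζ j) (fun i => BMeas.sum fun j _ => mζ j)
        (fun i => BMeas.sum fun j _ => mζ j) hSζ
        (by
          intro i
          simp only [hζ]
          rw [integral_sub ((bmX i).int μ) (integrable_const _)]
          simp [hc])
        (fun i ω => babs i ω _ (hAD i)) (fun i ω => babs i ω _ (hBD i))
        (fun i ω => bsum i ω _ (Finset.Subset.refl _))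
        (fun i ω => (babs i ω _ (hCD i)).trans (bsum i ω _ (Finset.Subset.refl _)))
        (by
          intro i
          rw [hSc]
          exact hind1 i (fun x => tr x - c i) (fun j x => tr x - c j) (mtr.sub_const _)
            fun j => mtr.sub_const _)
        (by
          intro i
          rw [hSc]
          refine aux_indep ((IndepFun_iff_Indep _ _ _).1 (i2 i)) ?_ ?_
          · exact aux_pair (mζm i (aux_ms X _ i (hA i)))
              (aux_msum fun j hj => mζm j (aux_ms X _ j hj))
          · exact aux_msum fun j hj => mζm j (aux_ms X _ j hj))
        (by
          intro i
          rw [hSc]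
          refine aux_indep ((IndepFun_iff_Indep _ _ _).1 (i4 i)) ?_ ?_
          · refine aux_triple
              (mζm i (aux_ms2 X A _ i i (hBBs i (hAB i (hA i))) (hA i)))
              (aux_msum fun j hj => mζm j (aux_ms2 X A _ j j (hBBs i (hAB i hj)) (hA j)))
              (aux_msum fun j hj => mζm j (aux_ms2 X A _ j j (hBBs i hj) (hA j)))
          · exact aux_msum fun j hj => mζm j (aux_ms2 X A _ j j hj (hA j)))
        varS
      have Z3 : ∑ i, ∫ ω, |ζ i ω| ^ 3 ∂μ ≤ 8 * β₃ := by
        rw [hβ₃', Finset.mul_sum]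
        refine Finset.sum_le_sum fun i _ => ?_
        have j3 := aux_jensen3 μ (bmX i).abs fun ω => abs_nonneg _
        have hca : |c i| ≤ ∫ ω, |tr (X i ω)| ∂μ := abs_integral_le_integral_abs
        have hca3 := pow_le_pow_left₀ (abs_nonneg _) hca 3
        have : ∫ ω, |ζ i ω| ^ 3 ∂μ ≤ ∫ ω, (4 * |tr (X i ω)| ^ 3 + 4 * |c i| ^ 3) ∂μ := by
          refine integral_mono (((mζ i).abs.pow 3).int μ)
            ((((BMeas.const _).mul ((bmX i).abs.pow 3)).add (BMeas.const _)).int μ) fun ω => ?_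
          simp only
          have h1 : |ζ i ω| ≤ |tr (X i ω)| + |c i| := abs_sub _ _
          refine (pow_le_pow_left₀ (abs_nonneg _) h1 3).trans ?_
          have a0 := abs_nonneg (tr (X i ω))
          have b0 := abs_nonneg (c i)
          nlinarith [mul_nonneg (add_nonneg a0 b0) (sq_nonneg (|tr (X i ω)| - |c i|))]
        rw [integral_add (((BMeas.const _).mul ((bmX i).abs.pow 3)).int μ) (integrable_const _),
          integral_const_mul] at this
        simp only [integral_const, probReal_univ, one_smul] at this
        linarith
      have S20 : 0 ≤ ∫ ω, S ω ^ 2 ∂μ := integral_nonneg fun ω => sq_nonneg _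
      have F2 : ∫ ω, S ω ^ 4 ∂μ ≤ 16 + 256 * κ ^ 2 * β₃ := by
        have h1 : (∫ ω, S ω ^ 2 ∂μ) ^ 2 ≤ (9 / 4) ^ 2 := pow_le_pow_left₀ S20 varS 2
        have h2 := mul_le_mul_of_nonneg_left Z3 (by positivity : 0 ≤ 32 * (κ : ℝ) ^ 2)
        linarith
      have t := aux_tail4 μ bWb EWb' (256 * κ ^ 2 * β₃) (by positivity) F2 z hz29
      have hk : 64 * (κ : ℝ) ^ 2 * β₂ ≤ κ / 2 := by
        have h1 : 64 * (κ : ℝ) ^ 2 * β₂ ≤ 64 * (κ : ℝ) ^ 2 * (τ / 16) :=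
          mul_le_mul_of_nonneg_left hβ (by positivity)
        have h2 : 64 * (κ : ℝ) ^ 2 * (τ / 16) = 4 * κ * (κ * τ) := by ring
        rw [h2, κτ] at h1
        linarith
      have t2 := mul_le_mul_of_nonneg_left t (by positivity : 0 ≤ 64 * (κ : ℝ) ^ 2 * β₂)
      have t3 : 64 * (κ : ℝ) ^ 2 * β₂ * (256 * κ ^ 2 * β₃ * ((1 + z) ^ 3)⁻¹) ≤
          κ / 2 * (256 * κ ^ 2 * β₃ * ((1 + z) ^ 3)⁻¹) :=
        mul_le_mul_of_nonneg_right hk (by positivity)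
      have t4 : (κ : ℝ) / 2 * (256 * κ ^ 2 * β₃ * ((1 + z) ^ 3)⁻¹)
          = 128 * ((z + 1) ^ 3)⁻¹ * (κ : ℝ) ^ 3 * β₃ := by
        rw [add_comm z 1]; ring
      have t5 : 0 ≤ 64 * (κ : ℝ) ^ 2 * β₂ * μ.real {ω | (z - 1) / 2 < W ω} := by positivity
      linarith
end

section
/- For every real w ≥ 0, 0 ≤ √(2π) (1 + w²) e^{w²/2} (1 − Φ(w)) − w ≤ 2/(1 + w³). -/
open MeasureTheory Real

noncomputable def stdGaussianCDF : ℝ → ℝ :=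
  fun z => ∫ x in Set.Iic z, (Real.sqrt (2 * Real.pi))⁻¹ * Real.exp (-x ^ 2 / 2)

theorem aux_int : Integrable (fun x : ℝ => Real.exp (-x ^ 2 / 2)) := by
  have := integrable_exp_neg_mul_sq (b := 1/2) (by norm_num)
  refine this.congr (Filter.Eventually.of_forall fun x => ?_)
  simp only
  congr 1; ring

theorem aux_total : ∫ x : ℝ, Real.exp (-x ^ 2 / 2) = Real.sqrt (2 * Real.pi) := by
  have := integral_gaussian (1/2)
  rw [show (2 * Real.pi) = Real.pi / (1/2) by ring, ← this]
  congr 1; ext x; congr 1; ring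

theorem aux_half : ∫ x in Set.Ioi (0:ℝ), Real.exp (-x ^ 2 / 2) = Real.sqrt (2 * Real.pi) / 2 := by
  have := integral_gaussian_Ioi (1/2)
  rw [show (2 * Real.pi) = Real.pi / (1/2) by ring, ← this]
  congr 1; ext x; congr 1; ring

theorem aux_cdf (w : ℝ) : Real.sqrt (2 * Real.pi) * (1 - stdGaussianCDF w) =
    ∫ x in Set.Ioi w, Real.exp (-x ^ 2 / 2) := by
  have hs : 0 < Real.sqrt (2 * Real.pi) := Real.sqrt_pos.2 (by positivity)
  have h := intervalIntegral.integral_Iic_add_Ioi (b := w) (aux_int.integrableOn) (aux_int.integrableOn)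
  rw [aux_total] at h
  unfold stdGaussianCDF
  simp only [integral_const_mul]
  rw [mul_sub, mul_inv_cancel_left₀ hs.ne']
  linarith

theorem aux_exp_tendsto : Filter.Tendsto (fun x : ℝ => Real.exp (-x ^ 2 / 2)) Filter.atTop (nhds 0) := by
  refine Real.tendsto_exp_atBot.comp ?_
  have h : Filter.Tendsto (fun x : ℝ => x ^ 2 / 2) Filter.atTop Filter.atTop :=
    (Filter.tendsto_pow_atTop (by norm_num)).atTop_div_const (by norm_num)
  refine (Filter.tendsto_neg_atTop_atBot.comp h).congr fun x => ?_
  simp only [Function.comp]; ring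

theorem aux_exp_deriv (x : ℝ) :
    HasDerivAt (fun x : ℝ => Real.exp (-x ^ 2 / 2)) (Real.exp (-x ^ 2 / 2) * (-x)) x := by
  have h : HasDerivAt (fun x : ℝ => -x ^ 2 / 2) (-x) x := by
    refine ((hasDerivAt_pow 2 x).neg.div_const 2).congr_deriv ?_
    norm_num
    try ring
  exact h.exp

theorem aux_tendsto (g : ℝ → ℝ) (C : ℝ) (hg : ∀ x, 1 ≤ x → 0 ≤ g x ∧ g x ≤ C) :
    Filter.Tendsto (fun x => -(g x * Real.exp (-x ^ 2 / 2))) Filter.atTop (nhds 0) := by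
  have h2 : Filter.Tendsto (fun x : ℝ => -(C * Real.exp (-x ^ 2 / 2))) Filter.atTop (nhds 0) := by
    simpa using (aux_exp_tendsto.const_mul C).neg
  refine tendsto_of_tendsto_of_tendsto_of_le_of_le' h2 tendsto_const_nhds ?_ ?_
  · filter_upwards [Filter.eventually_ge_atTop 1] with x hx
    have := mul_le_mul_of_nonneg_right (hg x hx).2 (Real.exp_pos (-x ^ 2 / 2)).le
    linarith
  · filter_upwards [Filter.eventually_ge_atTop 1] with x hx
    have := mul_nonneg (hg x hx).1 (Real.exp_pos (-x ^ 2 / 2)).le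
    linarith

theorem aux_lower (w : ℝ) : w / (1 + w ^ 2) * Real.exp (-w ^ 2 / 2) ≤
    ∫ x in Set.Ioi w, Real.exp (-x ^ 2 / 2) := by
  have hd : ∀ x : ℝ, HasDerivAt (fun x : ℝ => -(x / (1 + x ^ 2) * Real.exp (-x ^ 2 / 2)))
      ((1 - 2 / (1 + x ^ 2) ^ 2) * Real.exp (-x ^ 2 / 2)) x := by
    intro x
    have h0 : (1 + x ^ 2) ≠ 0 := by positivity
    have h1 := (((hasDerivAt_id x).div ((hasDerivAt_pow 2 x).const_add 1) h0).mul (aux_exp_deriv x)).neg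
    refine h1.congr_deriv ?_
    simp only [id, Pi.div_apply]
    field_simp
    push_cast
    ring
  have hb : ∀ x : ℝ, 0 ≤ 2 / (1 + x ^ 2) ^ 2 ∧ 2 / (1 + x ^ 2) ^ 2 ≤ 2 := by
    intro x
    refine ⟨by positivity, ?_⟩
    rw [div_le_iff₀ (by positivity)]
    nlinarith [sq_nonneg x, sq_nonneg (x ^ 2)]
  have hi : Integrable (fun x : ℝ => (1 - 2 / (1 + x ^ 2) ^ 2) * Real.exp (-x ^ 2 / 2)) := by
    refine aux_int.mono' (by fun_prop) (Filter.Eventually.of_forall fun x => ?_)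
    rw [norm_mul, Real.norm_eq_abs, Real.norm_eq_abs, abs_of_pos (Real.exp_pos _)]
    have : |1 - 2 / (1 + x ^ 2) ^ 2| ≤ 1 := by
      rw [abs_le]; constructor <;> linarith [(hb x).1, (hb x).2]
    exact mul_le_of_le_one_left (Real.exp_pos _).le this
  have ht := aux_tendsto (fun x => x / (1 + x ^ 2)) 1 (fun x hx => ⟨by positivity, by
    rw [div_le_one (by positivity)]; nlinarith⟩)
  have h := integral_Ioi_of_hasDerivAt_of_tendsto' (a := w) (fun x _ => hd x) hi.integrableOn ht
  have h' : w / (1 + w ^ 2) * Real.exp (-w ^ 2 / 2) =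
    ∫ x in Set.Ioi w, (1 - 2 / (1 + x ^ 2) ^ 2) * Real.exp (-x ^ 2 / 2) := by
    rw [h]; ring
  rw [h']
  refine integral_mono hi.integrableOn aux_int.integrableOn fun x => ?_
  exact mul_le_of_le_one_left (Real.exp_pos _).le (by linarith [(hb x).1])

theorem aux_upper (w : ℝ) (hw : 0 < w) : ∫ x in Set.Ioi w, Real.exp (-x ^ 2 / 2) ≤
    (w ^ 2 + 2) / (w ^ 3 + 3 * w) * Real.exp (-w ^ 2 / 2) := by
  have hd : ∀ x : ℝ, 0 < x →
      HasDerivAt (fun x : ℝ => -((x ^ 2 + 2) / (x ^ 3 + 3 * x) * Real.exp (-x ^ 2 / 2)))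
      ((1 + 6 / (x ^ 2 * (x ^ 2 + 3) ^ 2)) * Real.exp (-x ^ 2 / 2)) x := by
    intro x hx
    have h0 : (x ^ 3 + 3 * x) ≠ 0 := by positivity
    have h1 := ((((hasDerivAt_pow 2 x).add_const 2).div ((hasDerivAt_pow 3 x).add
      ((hasDerivAt_id x).const_mul 3)) h0).mul (aux_exp_deriv x)).neg
    refine h1.congr_deriv ?_
    simp only [id, Pi.div_apply, Pi.add_apply]
    have h2 : x ^ 3 + 3 * x = x * (x ^ 2 + 3) := by ring
    rw [h2]
    field_simp
    push_cast
    ring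
  have ht := aux_tendsto (fun x => (x ^ 2 + 2) / (x ^ 3 + 3 * x)) 1 (fun x hx => ⟨by positivity, by
    rw [div_le_one (by positivity)]; nlinarith [mul_nonneg (sq_nonneg x) (sub_nonneg.2 hx)]⟩)
  have hi := integrableOn_Ioi_deriv_of_nonneg' (a := w)
    (fun x hx => hd x (lt_of_lt_of_le hw hx)) (fun x hx => by positivity) ht
  have h := integral_Ioi_of_hasDerivAt_of_tendsto' (a := w)
    (fun x hx => hd x (lt_of_lt_of_le hw hx)) hi ht
  rw [zero_sub, neg_neg] at h
  rw [← h]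
  refine integral_mono aux_int.integrableOn hi fun x => ?_
  exact le_mul_of_one_le_left (Real.exp_pos _).le (by
    have : 0 ≤ 6 / (x ^ 2 * (x ^ 2 + 3) ^ 2) := by positivity
    linarith)

theorem stmt_19 :
    ∀ w : ℝ, 0 ≤ w →
      0 ≤ Real.sqrt (2 * Real.pi) * (1 + w ^ 2) * Real.exp (w ^ 2 / 2) *
            (1 - stdGaussianCDF w) - w ∧
      Real.sqrt (2 * Real.pi) * (1 + w ^ 2) * Real.exp (w ^ 2 / 2) *
            (1 - stdGaussianCDF w) - w ≤ 2 / (1 + w ^ 3) := by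
  intro w hw
  have e : Real.sqrt (2 * Real.pi) * (1 + w ^ 2) * Real.exp (w ^ 2 / 2) * (1 - stdGaussianCDF w)
      = (1 + w ^ 2) * Real.exp (w ^ 2 / 2) * ∫ x in Set.Ioi w, Real.exp (-x ^ 2 / 2) := by
    rw [← aux_cdf]; ring
  rw [e]
  have hE : Real.exp (w ^ 2 / 2) * Real.exp (-w ^ 2 / 2) = 1 := by
    rw [← Real.exp_add, ← Real.exp_zero]; congr 1; ring
  have hp : 0 < (1 + w ^ 2) * Real.exp (w ^ 2 / 2) := by positivity
  constructor
  · have h := mul_le_mul_of_nonneg_left (aux_lower w) hp.le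
    have h2 : (1 + w ^ 2) * Real.exp (w ^ 2 / 2) * (w / (1 + w ^ 2) * Real.exp (-w ^ 2 / 2)) = w := by
      calc _ = (1 + w ^ 2) * (w / (1 + w ^ 2)) * (Real.exp (w ^ 2 / 2) * Real.exp (-w ^ 2 / 2)) := by ring
        _ = w := by rw [hE]; field_simp
    linarith
  · rcases le_total (1/3) w with h3 | h3
    · have hw0 : 0 < w := by linarith
      have h := mul_le_mul_of_nonneg_left (aux_upper w hw0) hp.le
      have h2 : (1 + w ^ 2) * Real.exp (w ^ 2 / 2) *
          ((w ^ 2 + 2) / (w ^ 3 + 3 * w) * Real.exp (-w ^ 2 / 2)) = w + 2 / (w ^ 3 + 3 * w) := by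
        calc _ = (1 + w ^ 2) * ((w ^ 2 + 2) / (w ^ 3 + 3 * w)) *
              (Real.exp (w ^ 2 / 2) * Real.exp (-w ^ 2 / 2)) := by ring
          _ = _ := by
            rw [hE]
            have h0 : (w ^ 3 + 3 * w) ≠ 0 := by positivity
            field_simp
            ring
      have h4 : 2 / (w ^ 3 + 3 * w) ≤ 2 / (1 + w ^ 3) :=
        div_le_div_of_nonneg_left (by norm_num) (by positivity) (by linarith)
      linarith
    · have hQ : ∫ x in Set.Ioi w, Real.exp (-x ^ 2 / 2) ≤ 1.3 := by
        have h1 : ∫ x in Set.Ioi w, Real.exp (-x ^ 2 / 2) ≤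
            ∫ x in Set.Ioi (0:ℝ), Real.exp (-x ^ 2 / 2) :=
          setIntegral_mono_set aux_int.integrableOn
            (Filter.Eventually.of_forall fun x => (Real.exp_pos _).le)
            (Set.Ioi_subset_Ioi hw).eventuallyLE
        rw [aux_half] at h1
        have : Real.sqrt (2 * Real.pi) ≤ 2.6 := by
          rw [Real.sqrt_le_left (by norm_num)]
          have := Real.pi_lt_d2
          norm_num at *; linarith
        linarith
      have hw2 : w ^ 2 ≤ 1 / 9 := by nlinarith
      have hw3 : w ^ 3 ≤ 1 / 27 := by
        have := pow_le_pow_left₀ hw h3 3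
        norm_num at this ⊢; linarith
      have hexp : Real.exp (w ^ 2 / 2) ≤ 18 / 17 := by
        have h1 := Real.add_one_le_exp (-w ^ 2 / 2)
        have h2 := Real.exp_pos (w ^ 2 / 2)
        nlinarith
      have h5 : (1 + w ^ 2) * Real.exp (w ^ 2 / 2) ≤ 10 / 9 * (18 / 17) :=
        mul_le_mul (by linarith) hexp (Real.exp_pos _).le (by norm_num)
      have h6 : (1 + w ^ 2) * Real.exp (w ^ 2 / 2) * ∫ x in Set.Ioi w, Real.exp (-x ^ 2 / 2) ≤
          10 / 9 * (18 / 17) * 1.3 :=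
        mul_le_mul h5 hQ (integral_nonneg fun x => (Real.exp_pos _).le) (by norm_num)
      have h7 : (1.9 : ℝ) ≤ 2 / (1 + w ^ 3) := by
        rw [le_div_iff₀ (by positivity)]
        linarith
      norm_num at h6 h7
      linarith
end
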